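/- arXiv:1806.07107 — 6 statements merged into one kernel-verified Lean document; each statement's English description precedes it below -/
import Mathlib

section
/- Let R be a field and let c : ℤ² → R be a configuration (a function taking only finitely many values). If c has low complexity, i.e., there is a finite nonempty set D ⊆ ℤ² such that the number of distinct D-patterns of c is at most |D|, then there exists a nonzero Laurent polynomial f over R in two variables that annihilates c. -/
/-- Laurent polynomials over `R` in two variables: finitely supported functions
`ℤ² → R`, multiplied by convolution. -/
abbrev LP (R : Type*) [CommRing R] := AddMonoidAlgebra R (ℤ × ℤ)

/-- `f` annihilates the configuration `c` if the formal product of `f` with the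
power series of `c` is the zero power series. -/
def Annihilates {R : Type*} [CommRing R] (f : LP R) (c : ℤ × ℤ → R) : Prop :=
  ∀ n : ℤ × ℤ, ∑ m ∈ f.coeff.support, f.coeff m * c (n - m) = 0

/-- The set of `D`-patterns of `c`. -/
def Patterns {R : Type*} (c : ℤ × ℤ → R) (D : Finset (ℤ × ℤ)) : Set (D → R) :=
  Set.range fun t : ℤ × ℤ => fun d : D => c (t + d.1)

/-- `c` has low complexity with respect to some finite nonempty shape. -/
def LowComplexity {R : Type*} (c : ℤ × ℤ → R) : Prop :=
  ∃ D : Finset (ℤ × ℤ), D.Nonempty ∧ (Patterns c D).ncard ≤ D.card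

/-- `t` is a period vector of `c`. -/
def IsPeriodVector {R : Type*} (c : ℤ × ℤ → R) (t : ℤ × ℤ) : Prop :=
  t ≠ 0 ∧ ∀ n : ℤ × ℤ, c (n + t) = c n

/-- `c` is periodic. -/
def Periodic {R : Type*} (c : ℤ × ℤ → R) : Prop :=
  ∃ t : ℤ × ℤ, IsPeriodVector c t

/-- `c` is two-periodic: it has two linearly independent period vectors. -/
def TwoPeriodic {R : Type*} (c : ℤ × ℤ → R) : Prop :=
  ∃ t₁ t₂ : ℤ × ℤ, IsPeriodVector c t₁ ∧ IsPeriodVector c t₂ ∧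
    t₁.1 * t₂.2 - t₁.2 * t₂.1 ≠ 0

/-- `f` is a line polynomial in direction `u`: its support has at least two elements
and lies on a line `{n + r • u : r ∈ ℚ}`. -/
def IsLinePoly {R : Type*} [CommRing R] (u : ℤ × ℤ) (f : LP R) : Prop :=
  1 < f.coeff.support.card ∧ ∃ n : ℤ × ℤ, ∀ m ∈ f.coeff.support, ∃ r : ℚ,
    (m.1 : ℚ) = n.1 + r * u.1 ∧ (m.2 : ℚ) = n.2 + r * u.2

/-- A finite set `D ⊆ ℤ²` has an outer edge perpendicular to `v`. -/
def HasOuterEdge (D : Finset (ℤ × ℤ)) (v : ℤ × ℤ) : Prop :=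
  ∃ x ∈ D, (∀ y ∈ D, 0 ≤ (y.1 - x.1) * v.1 + (y.2 - x.2) * v.2) ∧
    ∃ y₁ ∈ D, ∃ y₂ ∈ D, y₁ ≠ y₂ ∧
      (y₁.1 - x.1) * v.1 + (y₁.2 - x.2) * v.2 = 0 ∧
      (y₂.1 - x.1) * v.1 + (y₂.2 - x.2) * v.2 = 0

/-!
Let `c` have at most `|D|` patterns. The `|D|` coordinate functions on the set of patterns, together
with the constant function `1`, lie in a free module of rank at most `|D|`, so they satisfy a
nontrivial linear relation. Read along all translates of `c`, this relation is a nonzero `g` whose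
product with `c` is constant. The difference of `g` and any of its translates then annihilates `c`,
and since the group is infinite, some translate of `g` differs from `g`.
-/

open scoped AddMonoidAlgebra

theorem exists_ne_zero_forall_dotProduct_eq {R ι : Type*} [Ring R] [StrongRankCondition R]
    [Fintype ι] {P : Set (ι → R)} (hfin : P.Finite) (hne : P.Nonempty)
    (hcard : P.ncard ≤ Fintype.card ι) :
    ∃ a : ι → R, a ≠ 0 ∧ ∃ b : R, ∀ p ∈ P, a ⬝ᵥ p = b := by
  have := hfin.fintype
  let coordinates : Option ι → P → R := fun i p => i.elim 1 p.1
  have hdep : ¬ LinearIndependent R coordinates := fun hli => by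
    have hle := hli.fintype_card_le_finrank
    rw [Module.finrank_pi, Fintype.card_option, ← Nat.card_eq_fintype_card (α := P),
      Nat.card_coe_set_eq] at hle
    exact (Nat.lt_of_succ_le hle).not_ge hcard
  obtain ⟨w, hw, hw_ne⟩ := Fintype.not_linearIndependent_iff.mp hdep
  have hrel : ∀ p ∈ P, (w ∘ some) ⬝ᵥ p = -w none := fun p hp => by
    have hw_p := congrFun hw ⟨p, hp⟩
    simp only [coordinates, Fintype.sum_option, Finset.sum_apply, Pi.smul_apply,
      Option.elim, smul_eq_mul, mul_one, Pi.zero_apply] at hw_p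
    exact eq_neg_of_add_eq_zero_right hw_p
  refine ⟨w ∘ some, fun ha => ?_, -w none, hrel⟩
  obtain ⟨p, hp⟩ := hne
  have hnone : w none = 0 := by simpa [ha] using hrel p hp
  obtain ⟨i, hi⟩ := hw_ne
  cases i with
  | none => exact hi hnone
  | some i => exact hi (congrFun ha i)

section Convolution

variable {R G : Type*} [AddGroup G]

/-- The formal product of `f : R[G]` with the power series of a configuration `c`, encoded as the
linear combination with coefficients `f` of the translates of `c`. -/
noncomputable def convolve [Semiring R] (c : G → R) : R[G] →ₗ[R] G → R :=
  Finsupp.linearCombination R (fun m n => c (n - m)) ∘ₗ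
    (AddMonoidAlgebra.coeffLinearEquiv R).toLinearMap

theorem convolve_apply [Semiring R] (c : G → R) (f : R[G]) (n : G) :
    convolve c f n = ∑ m ∈ f.coeff.support, f.coeff m * c (n - m) := by
  simp [convolve, Finsupp.linearCombination_apply, Finsupp.sum]

theorem convolve_mul_single_one [Semiring R] (c : G → R) (f : R[G]) (h n : G) :
    convolve c (f * .single h 1) n = convolve c f (n - h) := by
  induction f using AddMonoidAlgebra.induction_linear with
  | zero => simp
  | add f g hf hg => simp only [add_mul, map_add, Pi.add_apply, hf, hg]
  | single m r => simp [convolve, AddMonoidAlgebra.single_mul_single, sub_add_eq_sub_sub_swap]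

theorem exists_mul_single_one_ne [Semiring R] [Infinite G] {f : R[G]} (hf : f ≠ 0) :
    ∃ h : G, f * .single h 1 ≠ f := by
  obtain ⟨m, hm⟩ : ∃ m, f.coeff m ≠ 0 := by
    by_contra! hzero
    exact hf (AddMonoidAlgebra.ext (Finsupp.ext hzero))
  obtain ⟨k, hk⟩ := Infinite.exists_notMem_finset f.coeff.support
  refine ⟨-k + m, fun heq => hm ?_⟩
  have hcoeff : (f * .single (-k + m) 1).coeff m = f.coeff k := by
    simp [AddMonoidAlgebra.coeff_mul_single_apply]
  rw [← heq, hcoeff, Finsupp.notMem_support_iff.mp hk]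

theorem exists_convolve_eq_const [Ring R] [StrongRankCondition R] {c : G → R}
    (hfin : (Set.range c).Finite) {D : Finset G}
    (hcard : (Set.range fun (t : G) (d : D) => c (t + d)).ncard ≤ D.card) :
    ∃ g : R[G], g ≠ 0 ∧ ∃ b : R, convolve c g = Function.const G b := by
  have hfin_patterns : (Set.range fun (t : G) (d : D) => c (t + d)).Finite :=
    (Set.Finite.pi' fun _ => hfin).subset <| by
      rintro _ ⟨t, rfl⟩ d
      exact Set.mem_range_self _
  obtain ⟨a, ha, b, hab⟩ := exists_ne_zero_forall_dotProduct_eq hfin_patterns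
    (Set.range_nonempty _) (by rwa [Fintype.card_coe])
  let negEmb : D ↪ G := (Function.Embedding.subtype _).trans (Equiv.neg G).toEmbedding
  let g : R[G] := .ofCoeff (((Finsupp.linearEquivFunOnFinite R R D).symm a).embDomain negEmb)
  have hconv : convolve c g = Fintype.linearCombination R (fun d t => c (t - negEmb d)) a :=
    (Finsupp.linearCombination_embDomain ..).trans
      (Finsupp.linearCombination_eq_fintype_linearCombination_apply ..)
  refine ⟨g, ?_, b, ?_⟩
  · simpa [g] using ha
  · funext t
    rw [hconv, Function.const_apply, ← hab _ ⟨t, rfl⟩]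
    simp [Fintype.linearCombination_apply, negEmb, dotProduct]

theorem low_complexity_has_annihilator_field_general [Ring R] [StrongRankCondition R] [Infinite G]
    {c : G → R} (hfin : (Set.range c).Finite) {D : Finset G}
    (hcard : (Set.range fun (t : G) (d : D) => c (t + d)).ncard ≤ D.card) :
    ∃ f : R[G], f ≠ 0 ∧ ∀ n : G, ∑ m ∈ f.coeff.support, f.coeff m * c (n - m) = 0 := by
  obtain ⟨g, hg, b, hgc⟩ := exists_convolve_eq_const hfin hcard
  obtain ⟨h, hh⟩ := exists_mul_single_one_ne hg
  have hann : convolve c (g * .single h 1 - g) = 0 := by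
    funext n
    rw [map_sub, Pi.sub_apply, convolve_mul_single_one, hgc]
    exact sub_self b
  have hne : g * .single h 1 - g ≠ 0 := sub_ne_zero.mpr hh
  exact ⟨_, hne, fun n => (convolve_apply c _ n).symm.trans (congrFun hann n)⟩

end Convolution

/-- over a field, a low complexity configuration has a nonzero annihilator. -/
theorem low_complexity_has_annihilator_field {R : Type*} [Field R] (c : ℤ × ℤ → R)
    (hfin : (Set.range c).Finite) (hlc : LowComplexity c) :
    ∃ f : LP R, f ≠ 0 ∧ Annihilates f c := by
  obtain ⟨D, -, hD⟩ := hlc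
  exact low_complexity_has_annihilator_field_general hfin hD
end

section
/- Let c : ℤ² → ℤ be a configuration (a function taking only finitely many values). If c has low complexity, i.e., there is a finite nonempty set D ⊆ ℤ² such that the number of distinct D-patterns of c is at most |D|, then there exists a nonzero Laurent polynomial f over ℤ in two variables that annihilates c. -/
/-!
Let `P` be the finite set of `D`-patterns of `c`, and fix `p₀ ∈ P`. The differences `p - p₀` with
`p ≠ p₀` number fewer than `|D|`, so some nonzero weight vector on `D` is orthogonal to all of them.
Read as a Laurent polynomial `g`, it makes the formal product `g · c` constant, and multiplying by
one more factor `X^u - 1` kills constants. That factor is not a zero divisor when `u` has infinite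
order, because a nonzero finitely supported function has no such period.
-/

section LinearRelations

variable {R ι : Type*} [CommRing R] [Nontrivial R] [Fintype ι]

theorem exists_ne_zero_forall_dotProduct_eq_zero {S : Finset (ι → R)}
    (hS : S.card < Fintype.card ι) : ∃ a : ι → R, a ≠ 0 ∧ ∀ v ∈ S, a ⬝ᵥ v = 0 := by
  let M : Matrix S ι R := Matrix.of fun v => v.1
  have hM : ¬ Function.Injective M.mulVecLin := fun hinj =>
    hS.not_ge <| (card_le_of_injective R _ hinj).trans_eq (Fintype.card_coe S)
  rw [injective_iff_map_eq_zero] at hM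
  push Not at hM
  obtain ⟨a, hMa, ha⟩ := hM
  exact ⟨a, ha, fun v hv => (dotProduct_comm a v).trans (congrFun hMa ⟨v, hv⟩)⟩

theorem exists_ne_zero_forall_dotProduct_eq_const {P : Set (ι → R)} (hP : P.Finite)
    (hne : P.Nonempty) (hcard : P.ncard ≤ Fintype.card ι) :
    ∃ a : ι → R, a ≠ 0 ∧ ∃ b : R, ∀ p ∈ P, a ⬝ᵥ p = b := by
  classical
  obtain ⟨p₀, hp₀⟩ := hne
  lift P to Finset (ι → R) using hP
  rw [Set.ncard_coe_finset] at hcard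
  rw [Finset.mem_coe] at hp₀
  have hdiff : ((P.erase p₀).image (· - p₀)).card < Fintype.card ι :=
    (Finset.card_image_le.trans_lt (Finset.card_erase_lt_of_mem hp₀)).trans_le hcard
  obtain ⟨a, ha, horth⟩ := exists_ne_zero_forall_dotProduct_eq_zero hdiff
  refine ⟨a, ha, a ⬝ᵥ p₀, fun p hp => ?_⟩
  obtain rfl | hpp₀ := eq_or_ne p p₀
  · rfl
  · rw [← sub_eq_zero, ← dotProduct_sub]
    exact horth _ (Finset.mem_image_of_mem _ (Finset.mem_erase.2 ⟨hpp₀, hp⟩))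

end LinearRelations

section LaurentPolynomials

open AddMonoidAlgebra

theorem single_sub_one_mul_ne_zero {R G : Type*} [Ring R] [AddGroup G] {u : G}
    (hu : ¬ IsOfFinAddOrder u) {g : AddMonoidAlgebra R G} (hg : g ≠ 0) :
    (single u 1 - 1) * g ≠ 0 := by
  intro h
  rw [sub_mul, one_mul, sub_eq_zero] at h
  have hperiod (m : G) : g.coeff (u + m) = g.coeff m := by
    nth_rw 1 [← h]
    simp
  obtain ⟨m, hm⟩ := Finsupp.support_nonempty_iff.2 (coeff_eq_zero.not.2 hg)
  have horbit (k : ℕ) : k • u + m ∈ g.coeff.support := by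
    induction k with
    | zero => simpa using hm
    | succ k ih => simpa [succ_nsmul', add_assoc, hperiod] using ih
  have hinj : Function.Injective fun k : ℕ => k • u + m :=
    (add_left_injective m).comp (injective_nsmul_iff_not_isOfFinAddOrder.2 hu)
  exact Set.infinite_of_injective_forall_mem hinj horbit g.coeff.support.finite_toSet

variable {R G : Type*} [CommRing R] [AddCommGroup G]

variable (R G) in
/-- The action of `G` on configurations `G → R` by translation, as linear endomorphisms: `u` sends
`c` to `n ↦ c (n - u)`. -/
def translateHom : Multiplicative G →* Module.End R (G → R) where
  toFun u := LinearMap.funLeft R R (· - u.toAdd)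
  map_one' := by ext; simp
  map_mul' u v := by ext; simp [sub_sub]

/-- The formal product of a Laurent polynomial with a configuration, identified with a power
series. As an algebra homomorphism it is determined by `X^u` acting as translation by `u`. -/
noncomputable def formalProduct : AddMonoidAlgebra R G →ₐ[R] Module.End R (G → R) :=
  lift R (Module.End R (G → R)) G (translateHom R G)

theorem formalProduct_apply (f : AddMonoidAlgebra R G) (c : G → R) (n : G) :
    formalProduct f c n = f.coeff.sum fun m r => r * c (n - m) := by
  simp [formalProduct, lift_apply, translateHom, Finsupp.sum, LinearMap.funLeft_apply]

theorem annihilates_iff_formalProduct_eq_zero {f : LP R} {c : ℤ × ℤ → R} :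
    Annihilates f c ↔ formalProduct f c = 0 := by
  simp only [Annihilates, funext_iff, formalProduct_apply, Finsupp.sum, Pi.zero_apply]

theorem formalProduct_single_sub_one_const (u : G) (b : R) :
    formalProduct (single u 1 - 1) (fun _ => b) = 0 := by
  ext n
  simp [formalProduct, translateHom, LinearMap.funLeft_apply]

/-- The Laurent polynomial `∑ a_d X^(-d)` with weights `a` on `D`. The exponents are negated because
the formal product evaluates `c` at `n - m`, so that its values are the weighted sums of the
patterns `d ↦ c (n + d)`. -/
noncomputable def ofWeights (D : Finset G) (a : D → R) : AddMonoidAlgebra R G :=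
  ofCoeff <| (Finsupp.equivFunOnFinite.symm a).embDomain
    ((Function.Embedding.subtype _).trans (Equiv.neg G).toEmbedding)

theorem ofWeights_ne_zero {D : Finset G} {a : D → R} (ha : a ≠ 0) : ofWeights D a ≠ 0 := by
  rw [ofWeights, ne_eq, ofCoeff_eq_zero, Finsupp.embDomain_eq_zero]
  exact (Finsupp.linearEquivFunOnFinite R R D).symm.map_ne_zero_iff.2 ha

theorem formalProduct_ofWeights (D : Finset G) (a : D → R) (c : G → R) (n : G) :
    formalProduct (ofWeights D a) c n = a ⬝ᵥ fun d : D => c (n + d) := by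
  simp [formalProduct_apply, ofWeights, Finsupp.sum_embDomain, Finsupp.sum_fintype, dotProduct]

end LaurentPolynomials

theorem finite_patterns {R : Type*} {c : ℤ × ℤ → R} (hfin : (Set.range c).Finite)
    (D : Finset (ℤ × ℤ)) : (Patterns c D).Finite := by
  refine (Set.Finite.pi' fun _ : D => hfin).subset ?_
  rintro _ ⟨t, rfl⟩ d
  exact Set.mem_range_self _

theorem LowComplexity.exists_ne_zero_formalProduct_eq_const {R : Type*} [CommRing R] [Nontrivial R]
    {c : ℤ × ℤ → R} (hlc : LowComplexity c) (hfin : (Set.range c).Finite) :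
    ∃ g : LP R, g ≠ 0 ∧ ∃ b : R, formalProduct g c = fun _ => b := by
  obtain ⟨D, -, hcard⟩ := hlc
  rw [← Fintype.card_coe] at hcard
  obtain ⟨a, ha, b, hb⟩ := exists_ne_zero_forall_dotProduct_eq_const
    (finite_patterns hfin D) (Set.range_nonempty _) hcard
  refine ⟨ofWeights D a, ofWeights_ne_zero ha, b, funext fun n => ?_⟩
  rw [formalProduct_ofWeights]
  exact hb _ (Set.mem_range_self n)

theorem low_complexity_has_annihilator_int_general {R : Type*} [CommRing R] [Nontrivial R]
    (c : ℤ × ℤ → R) (hfin : (Set.range c).Finite) (hlc : LowComplexity c) :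
    ∃ f : LP R, f ≠ 0 ∧ Annihilates f c := by
  obtain ⟨g, hg, b, hgc⟩ := hlc.exists_ne_zero_formalProduct_eq_const hfin
  have hu : ¬ IsOfFinAddOrder ((1, 0) : ℤ × ℤ) :=
    not_isOfFinAddOrder_of_isAddTorsionFree (by simp)
  refine ⟨(AddMonoidAlgebra.single (1, 0) 1 - 1) * g, single_sub_one_mul_ne_zero hu hg, ?_⟩
  rw [annihilates_iff_formalProduct_eq_zero, map_mul, Module.End.mul_apply, hgc,
    formalProduct_single_sub_one_const]

/-- over ℤ, a low complexity configuration has a nonzero annihilator. -/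
theorem low_complexity_has_annihilator_int (c : ℤ × ℤ → ℤ)
    (hfin : (Set.range c).Finite) (hlc : LowComplexity c) :
    ∃ f : LP ℤ, f ≠ 0 ∧ Annihilates f c :=
  low_complexity_has_annihilator_int_general c hfin hlc
end

section
/- Let c : ℤ² → ℤ be a configuration (a function taking only finitely many values) that is annihilated by some nonzero Laurent polynomial over ℤ. Then there exist m ≥ 1 and nonzero vectors (i₁,j₁), …, (i_m,j_m) ∈ ℤ² such that the product (X^{i₁}Y^{j₁} − 1)···(X^{i_m}Y^{j_m} − 1) annihilates c. -/
/-!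
Write `f(Xᵏ)` for the polynomial obtained from `f` by multiplying all exponents by `k`. By Fermat's
little theorem `f(Xᵖ) ≡ f(X)ᵖ` modulo a prime `p`, so if `f(Xᵏ)` annihilates `c`, then all values of
`f(Xᵖᵏ) c` are divisible by `p`. They are also bounded independently of `k` and `p`, so they vanish
once `p` is large. Starting from `f` itself, `f(Xᵏ)` annihilates `c` for every `k` without small
prime factors, in particular for all `k = 1 + r i`, where `r` is a suitable factorial.

Write `f = ∑ᵥ aᵥ Xᵛ`. Linear combinations of the `f(X^(1 + r i))` then show that
`∑ᵥ aᵥ Xᵛ q(X^(r v))` annihilates `c` for every one-variable polynomial `q` over the Laurent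
polynomials. Choosing `q` to vanish at `X^(r u)` for all `u ≠ v₀` in the support isolates the
single term at `v₀`, which up to a monomial and a nonzero constant is `∏ᵤ (X^(r (v₀ - u)) - 1)`.
-/

namespace AnnihilatorDecomposition

open scoped AddMonoidAlgebra

section Convolution

variable {R A G : Type*} [CommRing R] [AddCommGroup A] [Module R A] [AddCommGroup G]

/-- The representation of `G` on functions `c : G → A` by translation, `X^g` sending `c` to
`n ↦ c (n - g)`. -/
def translation : Multiplicative G →* Module.End R (G → A) where
  toFun g := LinearMap.funLeft R A (· - g.toAdd)
  map_one' := by ext c n; simp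
  map_mul' g h := by ext c n; simp [LinearMap.funLeft_apply, sub_sub]

/-- The formal product `f c` of a Laurent polynomial `f` over `R` with exponents in `G` and a
configuration `c : G → A`, as an action of the algebra `R[G]`. -/
noncomputable def convolution : R[G] →ₐ[R] Module.End R (G → A) :=
  AddMonoidAlgebra.lift R (Module.End R (G → A)) G translation

lemma convolution_apply (f : R[G]) (c : G → A) (n : G) :
    convolution f c n = f.coeff.sum fun m a ↦ a • c (n - m) := by
  simp [convolution, AddMonoidAlgebra.lift_apply, Finsupp.sum, translation,
    LinearMap.funLeft_apply]

lemma convolution_single (v : G) (a : R) (c : G → A) (n : G) :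
    convolution (AddMonoidAlgebra.single v a) c n = a • c (n - v) := by
  simp [convolution_apply]

/-- The ideal of Laurent polynomials over `R` that annihilate the configuration `c`. -/
noncomputable def annihilator (c : G → A) : Ideal R[G] where
  carrier := {f | convolution f c = 0}
  add_mem' {f g} (hf : convolution f c = 0) (hg : convolution g c = 0) := by simp [hf, hg]
  zero_mem' := by simp
  smul_mem' f g (hg : convolution g c = 0) := by simp [hg]

lemma mem_annihilator {f : R[G]} {c : G → A} : f ∈ annihilator c ↔ convolution f c = 0 := Iff.rfl

lemma annihilates_iff_mem_annihilator {f : LP R} {c : ℤ × ℤ → R} :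
    Annihilates f c ↔ f ∈ annihilator c := by
  simp [Annihilates, mem_annihilator, funext_iff, convolution_apply, Finsupp.sum]

end Convolution

section Dilation

variable {R G : Type*} [CommSemiring R] [AddCommMonoid G]

/-- The dilation `f(X) ↦ f(Xᵏ)` of Laurent polynomials, which multiplies all exponents by `k`. -/
noncomputable def dilate (k : ℕ) : R[G] →ₗ[R] R[G] :=
  AddMonoidAlgebra.mapDomainLinearMap R R (k • ·)

@[simp]
lemma dilate_single (k : ℕ) (v : G) (a : R) :
    dilate k (AddMonoidAlgebra.single v a) = AddMonoidAlgebra.single (k • v) a :=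
  AddMonoidAlgebra.mapDomainLinearMap_single ..

lemma dilate_eq_sum (k : ℕ) (f : R[G]) :
    dilate k f = f.coeff.sum fun v a ↦ AddMonoidAlgebra.single (k • v) a := by
  conv_lhs => rw [← AddMonoidAlgebra.sum_coeff_single f]
  simp [Finsupp.sum]

@[simp]
lemma dilate_one (f : R[G]) : dilate 1 f = f := by
  simp [dilate_eq_sum]

lemma dilate_mul (k l : ℕ) (f : R[G]) : dilate (k * l) f = dilate k (dilate l f) := by
  simp [dilate_eq_sum l, dilate_eq_sum (k * l), Finsupp.sum, mul_smul]

lemma prime_dvd_dilate_sub_pow {p : ℕ} (hp : p.Prime) (f : ℤ[G]) :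
    (p : ℤ[G]) ∣ dilate p f - f ^ p := by
  induction f using AddMonoidAlgebra.induction_linear with
  | zero => simp [hp.ne_zero]
  | add f g hf hg =>
    obtain ⟨r, hr⟩ := exists_add_pow_prime_eq hp f g
    have split : dilate p (f + g) - (f + g) ^ p =
        (dilate p f - f ^ p) + (dilate p g - g ^ p) - p * (f * g * r) := by
      rw [hr, map_add]
      ring
    exact split ▸ dvd_sub (dvd_add hf hg) (dvd_mul_right _ _)
  | single v a =>
    obtain ⟨s, hs⟩ := (Int.ModEq.pow_prime_eq_self hp a).dvd
    refine ⟨AddMonoidAlgebra.single (p • v) s, ?_⟩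
    rw [dilate_single, AddMonoidAlgebra.single_pow, ← AddMonoidAlgebra.single_sub, hs,
      ← nsmul_eq_mul, ← nsmul_eq_mul, AddMonoidAlgebra.smul_single]

lemma sum_single_mul_eval_mem {I : Ideal R[G]} {f : R[G]} {r : ℕ}
    (hf : ∀ i, dilate (1 + r * i) f ∈ I) (q : Polynomial R[G]) :
    (f.coeff.sum fun v a ↦
      AddMonoidAlgebra.single v a * q.eval (AddMonoidAlgebra.single (r • v) 1)) ∈ I := by
  induction q using Polynomial.induction_on' with
  | add q₁ q₂ h₁ h₂ =>
    simpa only [Polynomial.eval_add, mul_add, Finsupp.sum_add] using I.add_mem h₁ h₂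
  | monomial i g =>
    convert I.mul_mem_left g (hf i) using 1
    rw [dilate_eq_sum, Finsupp.mul_sum]
    refine Finsupp.sum_congr fun v _ ↦ ?_
    rw [Polynomial.eval_monomial, mul_left_comm, AddMonoidAlgebra.single_pow,
      AddMonoidAlgebra.single_mul_single, one_pow, mul_one, add_smul, one_smul, mul_comm r,
      mul_smul]

end Dilation

lemma coeff_smul_prod_single_sub_one_mem {R G : Type*} [CommRing R] [AddCommGroup G]
    [DecidableEq G] {I : Ideal R[G]} {f : R[G]} {r : ℕ}
    (hf : ∀ i, dilate (1 + r * i) f ∈ I) (v₀ : G) :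
    f.coeff v₀ • ∏ u ∈ f.coeff.support.erase v₀,
      (AddMonoidAlgebra.single (r • (v₀ - u)) 1 - 1 : R[G]) ∈ I := by
  let q : Polynomial R[G] := ∏ u ∈ f.coeff.support.erase v₀,
    (Polynomial.C (AddMonoidAlgebra.single (-(r • u)) 1) * Polynomial.X - 1)
  have eval_q (v : G) : q.eval (AddMonoidAlgebra.single (r • v) 1) =
      ∏ u ∈ f.coeff.support.erase v₀, (AddMonoidAlgebra.single (r • (v - u)) 1 - 1) := by
    simp [q, Polynomial.eval_prod, AddMonoidAlgebra.single_mul_single, smul_sub, neg_add_eq_sub]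
  have eval_q_eq_zero (v : G) (hv : v ∈ f.coeff.support) (hne : v ≠ v₀) :
      q.eval (AddMonoidAlgebra.single (r • v) 1) = 0 := by
    rw [eval_q]
    exact Finset.prod_eq_zero (Finset.mem_erase.2 ⟨hne, hv⟩) (by simp [AddMonoidAlgebra.one_def])
  have term_mem : AddMonoidAlgebra.single v₀ (f.coeff v₀) *
      q.eval (AddMonoidAlgebra.single (r • v₀) 1) ∈ I := by
    have h := sum_single_mul_eval_mem hf q
    rwa [Finsupp.sum, Finset.sum_eq_single v₀ (fun v hv hne ↦ by simp [eval_q_eq_zero v hv hne])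
      (fun hv ↦ by simp [Finsupp.notMem_support_iff.1 hv])] at h
  rw [← eval_q]
  convert I.mul_mem_left (AddMonoidAlgebra.single (-v₀) 1) term_mem using 1
  rw [← mul_assoc, AddMonoidAlgebra.single_mul_single, neg_add_cancel, one_mul, Algebra.smul_def,
    AddMonoidAlgebra.coe_algebraMap, Function.comp_apply, Algebra.algebraMap_self_apply]

section IntegerConfigurations

variable {G : Type*} [AddCommGroup G] {c : G → ℤ} {f : ℤ[G]}

lemma exists_abs_convolution_dilate_le (hc : (Set.range c).Finite) (f : ℤ[G]) :
    ∃ B : ℕ, ∀ k n, |convolution (dilate k f) c n| ≤ B := by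
  obtain ⟨M, hM⟩ := (hc.image abs).bddAbove
  have abs_le (n : G) : |c n| ≤ M := hM ⟨c n, ⟨n, rfl⟩, rfl⟩
  refine ⟨(f.coeff.sum fun _ a ↦ |a| * M).toNat, fun k n ↦ (?_ : _ ≤ _).trans (Int.self_le_toNat _)⟩
  calc |convolution (dilate k f) c n|
    _ = |f.coeff.sum fun v a ↦ a * c (n - k • v)| := by
      simp [dilate_eq_sum, Finsupp.sum, convolution_single]
    _ ≤ f.coeff.sum fun v a ↦ |a * c (n - k • v)| := Finset.abs_sum_le_sum_abs _ _
    _ ≤ f.coeff.sum fun _ a ↦ |a| * M := by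
      refine Finset.sum_le_sum fun v _ ↦ ?_
      simpa only [abs_mul] using mul_le_mul_of_nonneg_left (abs_le _) (abs_nonneg _)

variable {B : ℕ}

lemma dilate_prime_mul_mem_annihilator (hB : ∀ k n, |convolution (dilate k f) c n| ≤ B) {k p : ℕ}
    (hp : p.Prime) (hBp : B < p) (hk : dilate k f ∈ annihilator c) :
    dilate (p * k) f ∈ annihilator c := by
  obtain ⟨g, hg⟩ := prime_dvd_dilate_sub_pow hp (dilate k f)
  have pow_mem : dilate k f ^ p ∈ annihilator c := Ideal.pow_mem_of_mem _ hk p hp.pos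
  have dvd (n : G) : (p : ℤ) ∣ convolution (dilate (p * k) f) c n := by
    rw [dilate_mul, sub_eq_iff_eq_add.1 hg, map_add, LinearMap.add_apply,
      mem_annihilator.1 pow_mem, add_zero, ← nsmul_eq_mul, map_nsmul]
    simp
  rw [mem_annihilator]
  ext n
  exact Int.eq_zero_of_abs_lt_dvd (dvd n) ((hB (p * k) n).trans_lt (by exact_mod_cast hBp))

lemma dilate_mem_annihilator (hB : ∀ k n, |convolution (dilate k f) c n| ≤ B)
    (hf : f ∈ annihilator c) {k : ℕ} (hk : k ≠ 0) (hBk : ∀ p, p.Prime → p ∣ k → B < p) :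
    dilate k f ∈ annihilator c := by
  induction k using induction_on_primes with
  | zero => exact absurd rfl hk
  | one => rwa [dilate_one]
  | prime_mul p k hp ih =>
    exact dilate_prime_mul_mem_annihilator hB hp (hBk p hp (dvd_mul_right p k))
      (ih (right_ne_zero_of_mul hk) fun q hq hqk ↦ hBk q hq (hqk.mul_left p))

lemma exists_forall_dilate_one_add_mul_mem_annihilator (hc : (Set.range c).Finite)
    (hf : f ∈ annihilator c) : ∃ r ≠ 0, ∀ i, dilate (1 + r * i) f ∈ annihilator c := by
  obtain ⟨B, hB⟩ := exists_abs_convolution_dilate_le hc f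
  refine ⟨B.factorial, B.factorial_ne_zero, fun i ↦
    dilate_mem_annihilator hB hf (by lia) fun p hp hdvd ↦ ?_⟩
  by_contra! hpB
  have dvd_mul : p ∣ B.factorial * i := (hp.dvd_factorial.2 hpB).mul_right i
  exact hp.not_dvd_one ((Nat.dvd_add_left dvd_mul).1 hdvd)

variable [IsAddTorsionFree G]

lemma exists_finset_prod_single_sub_one_mem_annihilator (hc : (Set.range c).Finite) (hf₀ : f ≠ 0)
    (hf : f ∈ annihilator c) :
    ∃ s : Finset G, 0 ∉ s ∧
      ∏ t ∈ s, (AddMonoidAlgebra.single t 1 - 1 : ℤ[G]) ∈ annihilator c := by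
  classical
  obtain ⟨r, hr₀, hr⟩ := exists_forall_dilate_one_add_mul_mem_annihilator hc hf
  obtain ⟨v₀, hv₀⟩ : ∃ v, f.coeff v ≠ 0 := by
    simpa using Finsupp.ne_iff.1 (AddMonoidAlgebra.coeff_eq_zero.not.2 hf₀)
  have inj : Function.Injective fun u ↦ r • (v₀ - u) :=
    (nsmul_right_injective hr₀).comp sub_right_injective
  refine ⟨(f.coeff.support.erase v₀).image fun u ↦ r • (v₀ - u), ?_, ?_⟩
  · simp +contextual [hr₀, sub_eq_zero, eq_comm]
  · have h := coeff_smul_prod_single_sub_one_mem hr v₀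
    rw [mem_annihilator, map_smul, LinearMap.smul_apply] at h
    rw [Finset.prod_image inj.injOn]
    exact (smul_eq_zero.1 h).resolve_left hv₀

end IntegerConfigurations

end AnnihilatorDecomposition

open AnnihilatorDecomposition in
theorem annihilator_decomposition_general {G : Type*} [AddCommGroup G] [IsAddTorsionFree G]
    [Nontrivial G] (c : G → ℤ) (hfin : (Set.range c).Finite)
    (h : ∃ f : AddMonoidAlgebra ℤ G, f ≠ 0 ∧ f ∈ annihilator c) :
    ∃ m : ℕ, 1 ≤ m ∧ ∃ t : Fin m → G, (∀ i, t i ≠ 0) ∧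
      ∏ i : Fin m, (AddMonoidAlgebra.single (t i) 1 - 1 : AddMonoidAlgebra ℤ G) ∈
        annihilator c := by
  classical
  obtain ⟨f, hf₀, hf⟩ := h
  obtain ⟨s, hs₀, hs⟩ := exists_finset_prod_single_sub_one_mem_annihilator hfin hf₀ hf
  obtain ⟨w, hw⟩ := exists_ne (0 : G)
  -- The extra factor at `w` ensures `1 ≤ m`: `s` is empty when `f` is a monomial.
  let e := (insert w s).equivFin.symm
  refine ⟨(insert w s).card, (Finset.insert_nonempty w s).card_pos, fun i ↦ e i,
    fun i hi ↦ ?_, ?_⟩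
  · exact (Finset.mem_insert.1 (hi ▸ (e i).2)).elim hw.symm hs₀
  · rw [e.prod_comp fun t ↦ (AddMonoidAlgebra.single t.1 1 - 1 : AddMonoidAlgebra ℤ G),
      Finset.prod_coe_sort (insert w s) fun t ↦
        (AddMonoidAlgebra.single t 1 - 1 : AddMonoidAlgebra ℤ G)]
    exact Ideal.mem_of_dvd _ (Finset.prod_dvd_prod_of_subset _ _ _ (Finset.subset_insert w s)) hs

/-- a configuration over ℤ with a nonzero annihilator is annihilated by a
product of difference polynomials (X^i Y^j − 1). -/
theorem annihilator_decomposition (c : ℤ × ℤ → ℤ) (hfin : (Set.range c).Finite)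
    (h : ∃ f : LP ℤ, f ≠ 0 ∧ Annihilates f c) :
    ∃ m : ℕ, 1 ≤ m ∧ ∃ t : Fin m → ℤ × ℤ, (∀ i, t i ≠ 0) ∧
      Annihilates (∏ i : Fin m, (AddMonoidAlgebra.single (t i) 1 - 1 : LP ℤ)) c := by
  simp only [AnnihilatorDecomposition.annihilates_iff_mem_annihilator] at h ⊢
  exact annihilator_decomposition_general c hfin h
end

section
/- Let R be an integral domain and let g, h be nonzero Laurent polynomials over R in two variables. If the support of g has an outer edge perpendicular to a nonzero vector v ∈ ℤ², then the support of the product gh also has an outer edge perpendicular to v. -/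
section MinFace

variable {G Γ : Type*} [LinearOrder Γ]

/-- The face of the finite set `D` exposed by the functional `φ`: the points of `D` at which `φ`
attains its minimum over `D`. -/
def minFace (φ : G → Γ) (D : Finset G) : Finset G :=
  {x ∈ D | ∀ y ∈ D, φ x ≤ φ y}

theorem mem_minFace {φ : G → Γ} {D : Finset G} {x : G} :
    x ∈ minFace φ D ↔ x ∈ D ∧ ∀ y ∈ D, φ x ≤ φ y :=
  Finset.mem_filter

theorem minFace_nonempty (φ : G → Γ) {D : Finset G} (hD : D.Nonempty) :
    (minFace φ D).Nonempty :=
  let ⟨x, hx, hmin⟩ := D.exists_min_image φ hD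
  ⟨x, mem_minFace.2 ⟨hx, hmin⟩⟩

theorem mem_minFace_of_eq {φ : G → Γ} {D : Finset G} {x y : G} (hx : x ∈ minFace φ D)
    (hy : y ∈ D) (hxy : φ x = φ y) : y ∈ minFace φ D :=
  mem_minFace.2 ⟨hy, hxy ▸ (mem_minFace.1 hx).2⟩

theorem eq_of_mem_minFace {φ : G → Γ} {D : Finset G} {x y : G} (hx : x ∈ minFace φ D)
    (hy : y ∈ minFace φ D) : φ x = φ y :=
  ((mem_minFace.1 hx).2 y (mem_minFace.1 hy).1).antisymm
    ((mem_minFace.1 hy).2 x (mem_minFace.1 hx).1)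

variable [Add G] [AddCommMonoid Γ] [IsOrderedCancelAddMonoid Γ]
  {F : Type*} [FunLike F G Γ] [AddHomClass F G Γ] {φ : F}

theorem uniqueAdd_of_uniqueAdd_minFace {A B : Finset G} {a b : G} (ha : a ∈ minFace φ A)
    (hb : b ∈ minFace φ B) (hab : UniqueAdd (minFace φ A) (minFace φ B) a b) :
    UniqueAdd A B a b := by
  intro a' b' ha' hb' hsum
  have hφ : φ a + φ b = φ a' + φ b' := by rw [← map_add, ← map_add, hsum]
  obtain ⟨hφa, hφb⟩ := (add_eq_add_iff_eq_and_eq ((mem_minFace.1 ha).2 a' ha')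
    ((mem_minFace.1 hb).2 b' hb')).1 hφ
  exact hab (mem_minFace_of_eq ha ha' hφa) (mem_minFace_of_eq hb hb' hφb) hsum

end MinFace

section SupportMul

variable {R G Γ : Type*} [Semiring R] [NoZeroDivisors R] [Add G]

theorem add_mem_support_coeff_mul_of_uniqueAdd {g h : AddMonoidAlgebra R G} {a b : G}
    (ha : a ∈ g.coeff.support) (hb : b ∈ h.coeff.support)
    (hab : UniqueAdd g.coeff.support h.coeff.support a b) :
    a + b ∈ (g * h).coeff.support := by
  rw [Finsupp.mem_support_iff, AddMonoidAlgebra.coeff_mul_add_of_uniqueAdd hab]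
  exact mul_ne_zero (Finsupp.mem_support_iff.1 ha) (Finsupp.mem_support_iff.1 hb)

variable [LinearOrder Γ] [AddCommMonoid Γ] [IsOrderedCancelAddMonoid Γ]
  {F : Type*} [FunLike F G Γ] [AddHomClass F G Γ]

theorem add_mem_minFace_support_coeff_mul {φ : F} {g h : AddMonoidAlgebra R G} {a b : G}
    (ha : a ∈ minFace φ g.coeff.support) (hb : b ∈ minFace φ h.coeff.support)
    (hab : UniqueAdd (minFace φ g.coeff.support) (minFace φ h.coeff.support) a b) :
    a + b ∈ minFace φ (g * h).coeff.support := by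
  classical
  have hab' := uniqueAdd_of_uniqueAdd_minFace ha hb hab
  rw [mem_minFace] at ha hb ⊢
  refine ⟨add_mem_support_coeff_mul_of_uniqueAdd ha.1 hb.1 hab', fun y hy ↦ ?_⟩
  obtain ⟨a', ha', b', hb', rfl⟩ :=
    Finset.mem_add.1 (AddMonoidAlgebra.support_coeff_mul_subset g h hy)
  rw [map_add, map_add]
  exact add_le_add (ha.2 a' ha') (hb.2 b' hb')

theorem minFace_support_coeff_mul_nontrivial [TwoUniqueSums G] (φ : F)
    {g h : AddMonoidAlgebra R G} (hg : (minFace φ g.coeff.support).Nontrivial) (hh : h ≠ 0) :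
    (minFace φ (g * h).coeff.support).Nontrivial := by
  have hsupp : h.coeff.support.Nonempty := by
    rwa [Finsupp.support_nonempty_iff, ne_eq, AddMonoidAlgebra.coeff_eq_zero]
  have hcard : 1 < (minFace φ g.coeff.support).card * (minFace φ h.coeff.support).card :=
    Nat.one_lt_mul_iff.2 ⟨hg.nonempty.card_pos, (minFace_nonempty φ hsupp).card_pos,
      .inl (Finset.one_lt_card_iff_nontrivial.2 hg)⟩
  obtain ⟨⟨a₁, b₁⟩, hp₁, ⟨a₂, b₂⟩, hp₂, hne, huniq₁, huniq₂⟩ :=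
    TwoUniqueSums.uniqueAdd_of_one_lt_card hcard
  obtain ⟨ha₁, hb₁⟩ := Finset.mem_product.1 hp₁
  obtain ⟨ha₂, hb₂⟩ := Finset.mem_product.1 hp₂
  refine ⟨a₁ + b₁, add_mem_minFace_support_coeff_mul ha₁ hb₁ huniq₁,
    a₂ + b₂, add_mem_minFace_support_coeff_mul ha₂ hb₂ huniq₂, fun hsum ↦ hne ?_⟩
  obtain ⟨ha, hb⟩ := huniq₂ ha₁ hb₁ hsum
  exact Prod.ext ha hb

end SupportMul

/-- The functional `p ↦ p · v` on `ℤ²`, used to express an outer edge perpendicular to `v` as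
a minimal face with at least two points. -/
def dotHom (v : ℤ × ℤ) : ℤ × ℤ →+ ℤ :=
  (AddMonoidHom.mulRight v.1).coprod (AddMonoidHom.mulRight v.2)

theorem sub_mul_add_sub_mul_eq_dotHom_sub (v x y : ℤ × ℤ) :
    (y.1 - x.1) * v.1 + (y.2 - x.2) * v.2 = dotHom v y - dotHom v x :=
  (map_sub (dotHom v) y x)

theorem hasOuterEdge_iff_minFace_nontrivial {D : Finset (ℤ × ℤ)} {v : ℤ × ℤ} :
    HasOuterEdge D v ↔ (minFace (dotHom v) D).Nontrivial := by
  simp only [HasOuterEdge, sub_mul_add_sub_mul_eq_dotHom_sub, sub_nonneg, sub_eq_zero]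
  constructor
  · rintro ⟨x, hx, hmin, y₁, hy₁, y₂, hy₂, hne, h₁, h₂⟩
    have hx' : x ∈ minFace (dotHom v) D := mem_minFace.2 ⟨hx, hmin⟩
    exact ⟨y₁, mem_minFace_of_eq hx' hy₁ h₁.symm, y₂, mem_minFace_of_eq hx' hy₂ h₂.symm, hne⟩
  · rintro ⟨y₁, h₁, y₂, h₂, hne⟩
    obtain ⟨hy₁, hmin⟩ := mem_minFace.1 h₁
    exact ⟨y₁, hy₁, hmin, y₁, hy₁, y₂, (mem_minFace.1 h₂).1, hne, rfl, eq_of_mem_minFace h₂ h₁⟩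

theorem outer_edge_of_mul_general {R : Type*} [Semiring R] [NoZeroDivisors R]
    (g h : AddMonoidAlgebra R (ℤ × ℤ)) (hh : h ≠ 0) (v : ℤ × ℤ)
    (hedge : HasOuterEdge g.coeff.support v) :
    HasOuterEdge (g * h).coeff.support v :=
  hasOuterEdge_iff_minFace_nontrivial.2 <|
    minFace_support_coeff_mul_nontrivial (dotHom v)
      (hasOuterEdge_iff_minFace_nontrivial.1 hedge) hh

/-- outer edges of supports are preserved under multiplication. -/
theorem outer_edge_of_mul {R : Type*} [CommRing R] [IsDomain R] (g h : LP R)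
    (hg : g ≠ 0) (hh : h ≠ 0) (v : ℤ × ℤ) (hv : v ≠ 0)
    (hedge : HasOuterEdge g.coeff.support v) :
    HasOuterEdge (g * h).coeff.support v :=
  outer_edge_of_mul_general g h hh v hedge
end

section
/- Every low complexity configuration in the Ledrappier subshift is periodic: if c : ℤ² → F₂ satisfies c(i,j) + c(i+1,j) + c(i,j+1) = 0 for all (i,j) ∈ ℤ², and there is a finite nonempty D ⊆ ℤ² such that the number of distinct D-patterns of c is at most |D|, then c is periodic. -/
/-!
A configuration of low complexity, lifted to integer values, satisfies a nontrivial linear relation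
`f • c = 0` with `f ∈ ℤ[X^±, Y^±]`, because it has too few patterns. For a prime `q` larger than
every value that `f(X ^ q) • c` can take, `f(X) ^ q ≡ f(X ^ q)` modulo `q` forces
`f(X ^ q) • c = 0`. Iterating gives an arithmetic progression of exponents `k` with
`f(X ^ k) • c = 0`, and a Vandermonde argument turns these relations into one of the form
`∏ (X ^ v - 1) • c = 0` with all `v ≠ 0`.

Reduce modulo 2 again, and let `u` and `w` be the images of the two variables in the quotient of
the group ring by the annihilator of `c`. In the Ledrappier subshift `w = -1 - u`, so the product
is, up to a unit, a nonzero polynomial in `u`. Thus `u` is algebraic over a finite field, hence of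
finite order, and so is `w`; their orders are a horizontal and a vertical period.
-/

open AddMonoidAlgebra Finset
open scoped AddMonoidAlgebra

namespace Ledrappier

/-- The action of `G` on configurations `G → M` by translation. -/
def translation (G R M : Type*) [AddCommGroup G] [CommRing R] [AddCommGroup M] [Module R M] :
    Multiplicative G →* Module.End R (G → M) where
  toFun g := LinearMap.funLeft R M (· + g.toAdd)
  map_one' := by ext; simp [LinearMap.funLeft]
  map_mul' g h := by ext; simp [LinearMap.funLeft, add_assoc]

/-- The group ring acts on configurations, the monomial of exponent `g` by `e ↦ e (· + g)`. This
is opposite to the convention of `Annihilates`, and makes the Ledrappier relation read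
`(1 + X + Y) • c = 0`. -/
noncomputable local instance groupRingModule {G R M : Type*} [AddCommGroup G] [CommRing R]
    [AddCommGroup M] [Module R M] : Module R[G] (G → M) :=
  Module.compHom _ (lift R _ G (translation G R M)).toRingHom

section Action

variable {G R S M : Type*} [AddCommGroup G] [CommRing R] [CommRing S] [AddCommGroup M] [Module R M]

lemma single_smul_apply (g : G) (r : R) (e : G → M) (n : G) :
    (single g r • e) n = r • e (n + g) := by
  change lift R _ G (translation G R M) (single g r) e n = _
  simp [translation, LinearMap.funLeft]

lemma mapRingHom_smul_comp (φ : R →+* S) (f : R[G]) (e : G → R) :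
    mapRingHom G φ f • (φ ∘ e) = φ ∘ (f • e) := by
  induction f using AddMonoidAlgebra.induction_linear with
  | zero => ext; simp
  | add f g hf hg => ext n; simp [add_smul, hf, hg]
  | single g r => ext n; simp [single_smul_apply]

lemma one_add_single_add_single_smul_eq_zero {c : ℤ × ℤ → M}
    (hc : ∀ i j : ℤ, c (i, j) + c (i + 1, j) + c (i, j + 1) = 0) :
    (1 + single (1, 0) 1 + single (0, 1) 1 : R[ℤ × ℤ]) • c = 0 := by
  ext ⟨i, j⟩
  simpa [add_smul, single_smul_apply] using hc i j

end Action

section Dilation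

variable {G R S : Type*} [AddCommGroup G] [CommRing R] [CommRing S]

/-- The substitution `f(X) ↦ f(X ^ k)`, multiplying all exponents by `k`. -/
noncomputable def dilate (k : ℕ) : R[G] →+* R[G] :=
  mapDomainRingHom R (nsmulAddMonoidHom k)

@[simp]
lemma dilate_single (k : ℕ) (g : G) (r : R) : dilate k (single g r) = single (k • g) r := by
  simp [dilate]

lemma dilate_mul (k l : ℕ) (f : R[G]) : dilate (k * l) f = dilate k (dilate l f) := by
  suffices (dilate (k * l) : R[G] →+* R[G]) = (dilate k).comp (dilate l) by simp [this]
  ext <;> simp [mul_smul]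

lemma dilate_one (f : R[G]) : dilate 1 f = f := by
  suffices (dilate 1 : R[G] →+* R[G]) = .id _ by simp [this]
  ext <;> simp

lemma dilate_eq_sum (k : ℕ) (f : R[G]) :
    dilate k f = ∑ g ∈ f.coeff.support, single (k • g) (f.coeff g) := by
  conv_lhs => rw [← sum_coeff_single f, Finsupp.sum, map_sum]
  simp only [dilate_single]

lemma mapRingHom_dilate (φ : R →+* S) (k : ℕ) (f : R[G]) :
    mapRingHom G φ (dilate k f) = dilate k (mapRingHom G φ f) := by
  suffices (mapRingHom G φ).comp (dilate k) = (dilate k).comp (mapRingHom G φ) by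
    simpa using congr($this f)
  ext <;> simp

lemma pow_eq_dilate {p : ℕ} [Fact p.Prime] (f : (ZMod p)[G]) : f ^ p = dilate p f := by
  have := charP_of_injective_algebraMap (algebraMap (ZMod p) (ZMod p)[G]).injective p
  suffices frobenius (ZMod p)[G] p = dilate p by simpa [frobenius_def] using congr($this f)
  ext <;> simp [frobenius_def, single_pow]

end Dilation

section Bounded

variable {G : Type*} [AddCommGroup G]

/-- The sum of the absolute values of the coefficients. -/
def l1Norm (f : ℤ[G]) : ℤ := ∑ g ∈ f.coeff.support, |f.coeff g|

variable {f : ℤ[G]} {e : G → ℤ} {B : ℤ}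

lemma abs_dilate_smul_apply_le (f : ℤ[G]) (he : ∀ n, |e n| ≤ B) (k : ℕ) (n : G) :
    |(dilate k f • e) n| ≤ l1Norm f * B := by
  rw [dilate_eq_sum, sum_smul, Finset.sum_apply, l1Norm, sum_mul]
  refine (abs_sum_le_sum_abs _ _).trans (sum_le_sum fun g _ ↦ ?_)
  rw [single_smul_apply, smul_eq_mul, abs_mul]
  exact mul_le_mul_of_nonneg_left (he _) (abs_nonneg _)

lemma prime_dvd_dilate_smul_apply {p : ℕ} (hp : p.Prime) (hf : f • e = 0) (n : G) :
    (p : ℤ) ∣ (dilate p f • e) n := by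
  have := Fact.mk hp
  let φ := Int.castRingHom (ZMod p)
  suffices φ ∘ (dilate p f • e) = 0 from
    (ZMod.intCast_zmod_eq_zero_iff_dvd _ p).1 congr($this n)
  calc φ ∘ (dilate p f • e)
      = mapRingHom G φ f ^ p • (φ ∘ e) := by
        rw [← mapRingHom_smul_comp, mapRingHom_dilate, pow_eq_dilate]
    _ = mapRingHom G φ f ^ (p - 1) • (φ ∘ (f • e)) := by
        rw [← pow_sub_one_mul hp.ne_zero, mul_smul, mapRingHom_smul_comp]
    _ = 0 := by
        have : φ ∘ (0 : G → ℤ) = 0 := by ext; simp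
        rw [hf, this, smul_zero]

/-- For a prime `p` above the bound, a value of `dilate (p * k) f • e` is a multiple of `p` of
absolute value less than `p`. -/
lemma dilate_smul_eq_zero (he : ∀ n, |e n| ≤ B) (hf : f • e = 0) {k : ℕ} (hk₀ : k ≠ 0)
    (hk : ∀ p : ℕ, p.Prime → p ∣ k → l1Norm f * B < p) : dilate k f • e = 0 := by
  induction k using induction_on_primes with
  | zero => contradiction
  | one => rwa [dilate_one]
  | prime_mul p k hp ih =>
    have hkf : dilate k f • e = 0 :=
      ih (right_ne_zero_of_mul hk₀) fun q hq hqk ↦ hk q hq (hqk.mul_left p)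
    ext n
    refine Int.eq_zero_of_abs_lt_dvd (m := p) ?_ ?_
    · rw [dilate_mul]
      exact prime_dvd_dilate_smul_apply hp hkf n
    · exact (abs_dilate_smul_apply_le f he _ n).trans_lt (hk p hp (dvd_mul_right p k))

lemma exists_dilate_one_add_mul_smul_eq_zero (he : ∀ n, |e n| ≤ B) (hf : f • e = 0) :
    ∃ m ≠ 0, ∀ i : ℕ, dilate (1 + i * m) f • e = 0 := by
  refine ⟨(l1Norm f * B).toNat.factorial, Nat.factorial_ne_zero _, fun i ↦ ?_⟩
  refine dilate_smul_eq_zero he hf (by omega) fun p hp hpk ↦ ?_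
  by_contra! hle
  have hpi : p ∣ i * (l1Norm f * B).toNat.factorial :=
    (hp.dvd_factorial.2 (by omega)).mul_left i
  exact hp.one_lt.ne' (Nat.dvd_one.1 ((Nat.dvd_add_left hpi).1 hpk))

end Bounded

section Vandermonde

variable {G R M : Type*} [AddCommGroup G] [CommRing R] [AddCommGroup M] [Module R M]

lemma sum_coeff_mul_dilate (q : Polynomial R[G]) (m : ℕ) (f : R[G]) :
    ∑ i ∈ range (q.natDegree + 1), q.coeff i * dilate (1 + i * m) f =
      ∑ g ∈ f.coeff.support, single g (f.coeff g) * q.eval (single (m • g) 1) := by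
  simp_rw [dilate_eq_sum, Polynomial.eval_eq_sum_range, mul_sum]
  rw [sum_comm]
  refine sum_congr rfl fun g _ ↦ sum_congr rfl fun i _ ↦ ?_
  rw [mul_left_comm, single_pow, single_mul_single, one_pow, mul_one, add_smul, one_smul, mul_smul]

/-- The dilates of `f` are the rows of a Vandermonde system with nodes `X ^ (m • g)`, for `g` in the
support of `f`; combining them with the coefficients of a polynomial vanishing at all nodes except
`X ^ (m • g₀)` isolates the term of `f` at `g₀`. -/
lemma prod_single_sub_one_smul_eq_zero [IsDomain R] [Module.IsTorsionFree R M] {f : R[G]}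
    {e : G → M} {m : ℕ} (h : ∀ i : ℕ, dilate (1 + i * m) f • e = 0) {g₀ : G}
    (hg₀ : g₀ ∈ f.coeff.support) [DecidableEq G] :
    (∏ g ∈ f.coeff.support.erase g₀, (single (m • (g₀ - g)) (1 : R) - 1)) • e = 0 := by
  let q : Polynomial R[G] := ∏ g ∈ f.coeff.support.erase g₀,
    (Polynomial.C (single (-(m • g)) 1) * Polynomial.X - 1)
  have hq (g' : G) : q.eval (single (m • g') 1) =
      ∏ g ∈ f.coeff.support.erase g₀, (single (m • (g' - g)) 1 - 1) := by
    simp [q, Polynomial.eval_prod, single_mul_single, smul_sub, neg_add_eq_sub]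
  have hq_eq_zero (g : G) (hg : g ∈ f.coeff.support) (hne : g ≠ g₀) :
      q.eval (single (m • g) 1) = 0 := by
    rw [hq]
    exact prod_eq_zero (mem_erase.2 ⟨hne, hg⟩) (by simp [one_def])
  have hsum : (single g₀ (f.coeff g₀) * q.eval (single (m • g₀) 1)) • e = 0 := by
    rw [← sum_eq_single_of_mem (f := fun g ↦ single g (f.coeff g) * q.eval (single (m • g) 1))
      g₀ hg₀ fun g hg hne ↦ by rw [hq_eq_zero g hg hne, mul_zero], ← sum_coeff_mul_dilate, sum_smul]
    exact sum_eq_zero fun i _ ↦ by rw [mul_smul, h, smul_zero]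
  ext n
  have hn := congr_fun hsum (n - g₀)
  rw [mul_smul, single_smul_apply, sub_add_cancel, hq] at hn
  exact (smul_eq_zero.1 hn).resolve_left (Finsupp.mem_support_iff.1 hg₀)

end Vandermonde

theorem exists_prod_single_sub_one_smul_eq_zero {G : Type*} [AddCommGroup G] [IsAddTorsionFree G]
    {f : ℤ[G]} (hf₀ : f ≠ 0) {e : G → ℤ} {B : ℤ} (he : ∀ n, |e n| ≤ B) (hf : f • e = 0) :
    ∃ V : Finset G, 0 ∉ V ∧ (∏ v ∈ V, (single v (1 : ℤ) - 1)) • e = 0 := by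
  classical
  obtain ⟨m, hm, hdilate⟩ := exists_dilate_one_add_mul_smul_eq_zero he hf
  obtain ⟨g₀, hg₀⟩ : f.coeff.support.Nonempty := by simpa using hf₀
  have hinj : Function.Injective fun g ↦ m • (g₀ - g) :=
    (nsmul_right_injective hm).comp sub_right_injective
  refine ⟨(f.coeff.support.erase g₀).image fun g ↦ m • (g₀ - g), ?_, ?_⟩
  · simp [hm, sub_eq_zero, eq_comm]
  · rw [prod_image hinj.injOn]
    exact prod_single_sub_one_smul_eq_zero hdilate hg₀

section LowComplexity

variable {A R : Type*} [Finite A] [CommRing R] {c : ℤ × ℤ → A}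

lemma exists_ne_zero_smul_comp_eq_const [Nontrivial R] (hc : LowComplexity c) (φ : A → R) :
    ∃ (f : R[ℤ × ℤ]) (a : R), f ≠ 0 ∧ f • (φ ∘ c) = Function.const _ a := by
  classical
  obtain ⟨D, -, hD⟩ := hc
  have := Fintype.ofFinite (Patterns c D)
  let b : Option D → Patterns c D → R := fun o P ↦ o.elim 1 fun d ↦ φ (P.1 d)
  have hb : ¬ LinearIndependent R b := fun hli ↦ by
    have hcard := hli.fintype_card_le_finrank
    rw [Module.finrank_fintype_fun_eq_card, Fintype.card_option, Fintype.card_coe,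
      ← Nat.card_eq_fintype_card, Nat.card_coe_set_eq] at hcard
    omega
  obtain ⟨a, ha, ha₀⟩ := Fintype.not_linearIndependent_iff.1 hb
  let f : R[ℤ × ℤ] := ∑ d : D, single d.1 (a (some d))
  have hrel (n : ℤ × ℤ) : a none + (f • (φ ∘ c)) n = 0 := by
    simpa [f, b, sum_smul, single_smul_apply] using congr_fun ha ⟨_, n, rfl⟩
  refine ⟨f, -a none, fun hf ↦ ?_, ?_⟩
  · have hsome (d : D) : a (some d) = 0 := by
      simpa [f, Finsupp.single_apply, Subtype.coe_inj] using congr(coeff $hf d.1)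
    have hnone : a none = 0 := by simpa [hf] using hrel 0
    obtain ⟨_ | d, hd⟩ := ha₀
    exacts [hd hnone, hd (hsome d)]
  · ext n
    exact (neg_eq_of_add_eq_zero_right (hrel n)).symm

lemma exists_ne_zero_smul_comp_eq_zero [IsDomain R] (hc : LowComplexity c) (φ : A → R) :
    ∃ f : R[ℤ × ℤ], f ≠ 0 ∧ f • (φ ∘ c) = 0 := by
  obtain ⟨f, a, hf₀, hf⟩ := exists_ne_zero_smul_comp_eq_const hc φ
  refine ⟨(single (1, 0) 1 - 1) * f, mul_ne_zero ?_ hf₀, ?_⟩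
  · rw [one_def, sub_ne_zero, (single_left_injective one_ne_zero).ne_iff]
    simp
  · ext n
    rw [mul_smul, hf, sub_smul, one_smul]
    simp [single_smul_apply]

end LowComplexity

theorem exists_prod_single_sub_one_smul_eq_zero_of_lowComplexity {p : ℕ} [Fact p.Prime]
    {c : ℤ × ℤ → ZMod p} (hc : LowComplexity c) :
    ∃ V : Finset (ℤ × ℤ), 0 ∉ V ∧ (∏ v ∈ V, (single v (1 : ZMod p) - 1)) • c = 0 := by
  let lift (a : ZMod p) : ℤ := a.val
  let φ := Int.castRingHom (ZMod p)
  have hlift : φ ∘ lift ∘ c = c := by ext n; simp [φ, lift]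
  have hbound (n : ℤ × ℤ) : |(lift ∘ c) n| ≤ p := by
    rw [Function.comp_apply, Nat.abs_cast]
    exact_mod_cast (ZMod.val_lt (c n)).le
  obtain ⟨f, hf₀, hf⟩ := exists_ne_zero_smul_comp_eq_zero hc lift
  obtain ⟨V, hV, h⟩ := exists_prod_single_sub_one_smul_eq_zero hf₀ hbound hf
  refine ⟨V, hV, ?_⟩
  calc (∏ v ∈ V, (single v (1 : ZMod p) - 1)) • c
      = mapRingHom _ φ (∏ v ∈ V, (single v 1 - 1)) • (φ ∘ lift ∘ c) := by
        simp [hlift, map_prod]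
    _ = 0 := by
        rw [mapRingHom_smul_comp, h]
        ext n
        simp

section Periods

variable {G R M : Type*} [AddCommGroup G] [CommRing R] [AddCommGroup M] [Module R M]

/-- The quotient of the group ring by the annihilator of `c`. -/
abbrev AnnihilatorQuotient (R : Type*) [CommRing R] [Module R M] (c : G → M) : Type _ :=
  R[G] ⧸ Ideal.torsionOf R[G] (G → M) c

/-- The monomials, as units of the quotient of the group ring by the annihilator of `c`. The
periods of `c` are the exponents of the monomials that become trivial there. -/
noncomputable def monomialUnit (R : Type*) [CommRing R] [Module R M] (c : G → M) :
    Multiplicative G →* (AnnihilatorQuotient R c)ˣ :=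
  ((Ideal.Quotient.mk _).toMonoidHom.comp (of R G)).toHomUnits

lemma coe_monomialUnit (c : G → M) (g : G) :
    (monomialUnit R c (.ofAdd g) : AnnihilatorQuotient R c) = Ideal.Quotient.mk _ (single g 1) :=
  rfl

lemma mk_eq_zero_iff {c : G → M} {f : R[G]} :
    (Ideal.Quotient.mk _ f : AnnihilatorQuotient R c) = 0 ↔ f • c = 0 := by
  rw [Ideal.Quotient.eq_zero_iff_mem, Ideal.mem_torsionOf_iff]

lemma monomialUnit_eq_one_iff {c : G → M} {g : G} :
    monomialUnit R c (.ofAdd g) = 1 ↔ ∀ n, c (n + g) = c n := by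
  rw [← Units.val_inj, coe_monomialUnit, Units.val_one, ← map_one (Ideal.Quotient.mk _),
    ← sub_eq_zero, ← map_sub, mk_eq_zero_iff, sub_smul, one_smul, sub_eq_zero, funext_iff]
  simp [single_smul_apply]

lemma monomialUnit_zpow_mul_zpow (c : ℤ × ℤ → M) (v : ℤ × ℤ) :
    monomialUnit R c (.ofAdd (1, 0)) ^ v.1 * monomialUnit R c (.ofAdd (0, 1)) ^ v.2 =
      monomialUnit R c (.ofAdd v) := by
  rw [← map_zpow (monomialUnit R c), ← map_zpow (monomialUnit R c), ← map_mul, ← ofAdd_zsmul,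
    ← ofAdd_zsmul, ← ofAdd_add]
  simp

lemma isPeriodVector_of_pow {c : ℤ × ℤ → M} {g : ℤ × ℤ} (hg : g ≠ 0) {N : ℕ} (hN : 0 < N)
    (h : monomialUnit R c (.ofAdd g) ^ N = 1) : IsPeriodVector c (N • g) := by
  refine ⟨smul_ne_zero hN.ne' hg, ?_⟩
  rwa [← monomialUnit_eq_one_iff (R := R), ofAdd_nsmul, map_pow]

end Periods

section FiniteOrder

open Polynomial

variable {K R : Type*} [Field K] [CommRing R] [Algebra K R]

lemma roots_X_pow_mul_neg_one_sub_X_pow (a b : ℕ) :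
    (X ^ a * (-1 - X) ^ b : K[X]).roots = a • {0} + b • {-1} := by
  have h : (-1 - X : K[X]) = -(X - C (-1)) := by simp; ring
  have h₀ : (-1 - X : K[X]) ≠ 0 := h ▸ neg_ne_zero.2 (X_sub_C_ne_zero _)
  rw [roots_mul (mul_ne_zero (pow_ne_zero _ X_ne_zero) (pow_ne_zero _ h₀)), roots_X_pow,
    roots_pow, h, roots_neg, roots_X_sub_C]

lemma X_pow_mul_neg_one_sub_X_pow_injective :
    Function.Injective fun n : ℕ × ℕ ↦ (X ^ n.1 * (-1 - X) ^ n.2 : K[X]) := by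
  classical
  rintro ⟨a₁, b₁⟩ ⟨a₂, b₂⟩ h
  have hroots := congr(roots $h)
  simp only [roots_X_pow_mul_neg_one_sub_X_pow] at hroots
  have h₀ := congr(Multiset.count 0 $hroots)
  have h₁ := congr(Multiset.count (-1) $hroots)
  exact Prod.ext (by simpa using h₀) (by simpa using h₁)

lemma exists_aeval_eq_mul_zpow_mul_zpow_sub_one {u w : Rˣ} (huw : (1 + u + w : R) = 0)
    {v : ℤ × ℤ} (hv : v ≠ 0) :
    ∃ P : K[X], P ≠ 0 ∧ ∃ r : R, aeval (u : R) P = r * ((u ^ v.1 * w ^ v.2 : Rˣ) - 1) := by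
  obtain ⟨a, b⟩ := v
  have hw : (-1 - u : R) = w := by linear_combination -huw
  refine ⟨X ^ a.toNat * (-1 - X) ^ b.toNat - X ^ (-a).toNat * (-1 - X) ^ (-b).toNat, ?_,
    (u ^ (-a).toNat * w ^ (-b).toNat : Rˣ), ?_⟩
  · rw [sub_ne_zero]
    refine X_pow_mul_neg_one_sub_X_pow_injective.ne
      (a₁ := (a.toNat, b.toNat)) (a₂ := ((-a).toNat, (-b).toNat)) fun h ↦ hv ?_
    simp only [Prod.mk.injEq, Prod.mk_eq_zero] at h ⊢
    omega
  · have hpow (x : Rˣ) (n : ℤ) : x ^ (-n).toNat * x ^ n = x ^ n.toNat := by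
      rw [← zpow_natCast, ← zpow_natCast, ← zpow_add]
      congr 1
      omega
    rw [mul_sub_one, ← Units.val_mul, mul_mul_mul_comm, hpow, hpow]
    simp [hw]

lemma isAlgebraic_of_prod_eq_zero {u w : Rˣ} (huw : (1 + u + w : R) = 0) {V : Finset (ℤ × ℤ)}
    (hV : 0 ∉ V) (h : ∏ v ∈ V, (((u ^ v.1 * w ^ v.2 : Rˣ) : R) - 1) = 0) :
    IsAlgebraic K (u : R) := by
  choose! P hP₀ r hP using fun v (hv : v ≠ 0) ↦
    exists_aeval_eq_mul_zpow_mul_zpow_sub_one (K := K) huw hv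
  have hV' (v) (hv : v ∈ V) : v ≠ 0 := ne_of_mem_of_not_mem hv hV
  refine ⟨∏ v ∈ V, P v, prod_ne_zero_iff.2 fun v hv ↦ hP₀ v (hV' v hv), ?_⟩
  rw [map_prod, prod_congr rfl fun v hv ↦ hP v (hV' v hv), prod_mul_distrib, h, mul_zero]

lemma isOfFinOrder_of_isAlgebraic [Finite K] {u : Rˣ} (hu : IsAlgebraic K (u : R)) :
    IsOfFinOrder u := by
  let S : Subalgebra K R := Algebra.adjoin K {(u : R)}
  have : Module.Finite K S := Module.Finite.iff_fg.2 hu.isIntegral.fg_adjoin_singleton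
  have : Finite S := Module.finite_of_finite K
  have hS : (S : Set R).Finite := Set.toFinite _
  refine finite_powers.1 ((hS.preimage Units.val_injective.injOn).subset ?_)
  rintro _ ⟨n, rfl⟩
  simpa using pow_mem (Algebra.self_mem_adjoin_singleton K (u : R)) n

lemma isOfFinOrder_of_prod_eq_zero [Finite K] {u w : Rˣ} (huw : (1 + u + w : R) = 0)
    {V : Finset (ℤ × ℤ)} (hV : 0 ∉ V)
    (h : ∏ v ∈ V, (((u ^ v.1 * w ^ v.2 : Rˣ) : R) - 1) = 0) :
    IsOfFinOrder u ∧ IsOfFinOrder w := by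
  have hu : IsAlgebraic K (u : R) := isAlgebraic_of_prod_eq_zero huw hV h
  have hw : IsAlgebraic K (w : R) := by
    rw [show (w : R) = -1 - u by linear_combination huw]
    exact isAlgebraic_one.neg.sub hu
  exact ⟨isOfFinOrder_of_isAlgebraic hu, isOfFinOrder_of_isAlgebraic hw⟩

end FiniteOrder

section TwoPeriodic

variable {K M : Type*} [Field K] [AddCommGroup M] [Module K M] {c : ℤ × ℤ → M}

theorem twoPeriodic_of_smul_eq_zero [Finite K]
    (hc : (1 + single (1, 0) 1 + single (0, 1) 1 : K[ℤ × ℤ]) • c = 0) {V : Finset (ℤ × ℤ)}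
    (hV : 0 ∉ V) (hprod : (∏ v ∈ V, (single v (1 : K) - 1)) • c = 0) : TwoPeriodic c := by
  let u := monomialUnit K c (.ofAdd (1, 0))
  let w := monomialUnit K c (.ofAdd (0, 1))
  have huw : 1 + (u : AnnihilatorQuotient K c) + w = 0 := mk_eq_zero_iff.2 hc
  have huw_prod : ∏ v ∈ V, (((u ^ v.1 * w ^ v.2 : (AnnihilatorQuotient K c)ˣ) :
      AnnihilatorQuotient K c) - 1) = 0 := by
    simp only [u, w, monomialUnit_zpow_mul_zpow, coe_monomialUnit]
    simpa only [map_prod, map_sub, map_one] using mk_eq_zero_iff.2 hprod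
  obtain ⟨hu, hw⟩ := isOfFinOrder_of_prod_eq_zero (K := K) huw hV huw_prod
  obtain ⟨N, hN, huN⟩ := hu.exists_pow_eq_one
  obtain ⟨L, hL, hwL⟩ := hw.exists_pow_eq_one
  refine ⟨N • (1, 0), L • (0, 1), isPeriodVector_of_pow (by simp) hN huN,
    isPeriodVector_of_pow (by simp) hL hwL, ?_⟩
  simp [hN.ne', hL.ne']

end TwoPeriodic

end Ledrappier

theorem ledrappier_nivat_general {p : ℕ} [Fact p.Prime] (c : ℤ × ℤ → ZMod p)
    (hc : ∀ i j : ℤ, c (i, j) + c (i + 1, j) + c (i, j + 1) = 0)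
    (hlc : LowComplexity c) : TwoPeriodic c := by
  obtain ⟨V, hV, hprod⟩ :=
    Ledrappier.exists_prod_single_sub_one_smul_eq_zero_of_lowComplexity hlc
  exact Ledrappier.twoPeriodic_of_smul_eq_zero
    (Ledrappier.one_add_single_add_single_smul_eq_zero hc) hV hprod

/-- every low complexity configuration in the Ledrappier subshift is periodic. -/
theorem ledrappier_nivat (c : ℤ × ℤ → ZMod 2)
    (hc : ∀ i j : ℤ, c (i, j) + c (i + 1, j) + c (i, j + 1) = 0)
    (hlc : LowComplexity c) : Periodic c := by
  obtain ⟨t, -, ht, -⟩ := ledrappier_nivat_general c hc hlc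
  exact ⟨t, ht⟩
end

section
/- Let c : ℤ² → F₂ satisfy c(i,j) + c(i+1,j) + c(i,j+1) = 0 for all (i,j) ∈ ℤ², and let c' : ℤ² → ℤ be the configuration obtained by renaming 0_{F₂} ↦ 0 and 1_{F₂} ↦ 1. If some nonzero Laurent polynomial over ℤ annihilates c', then c is periodic. -/
/-! Let `c` be a configuration over a finite field `k`, with a bounded integer lift `c'`
annihilated by a Laurent polynomial `f(x)` over `ℤ`. For a prime `q`, Frobenius gives
`f(x ^ q) ≡ f ^ q` modulo `q`, so `f(x ^ q) • c'` takes values in `q ℤ`; as `c'` is bounded, these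
values are also bounded independently of `q`, and therefore vanish once `q` is large. Dividing `f`
by its content, we may reduce `f` modulo the characteristic of `k` without killing it.

On `c` the vertical translation acts as `r(X)`, where `X` is the horizontal translation and
`r = -1 - X` in Ledrappier's case. Hence, with `P(X, Y)` the reduction of `f` up to a monomial, the
one-variable polynomial `P(X ^ q, r(X) ^ q)` annihilates `c`. If it were zero, then `P(X ^ q, Y)`
would vanish at `Y = r(ζ X) ^ q` for all `q`-th roots of unity `ζ`, and these are more roots than
its degree in `Y` allows. So `c` is annihilated by a nonzero polynomial in the horizontal
translation alone, and over a finite field such a polynomial divides some `X ^ a - X ^ b` with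
`a ≠ b`, which makes `c` periodic. -/

open Polynomial
open scoped Polynomial.Bivariate

section Action

open AddMonoidAlgebra (single mapRingHom)

variable {R S G : Type*} [CommRing R] [CommRing S] [AddCommGroup G]

variable (R G) in
/-- The action of formal Laurent polynomials on configurations `G → R` by the formal product
`(f • c) n = ∑ m, f m * c (n - m)`; the monomial at `m` acts as the translation by `m`. -/
noncomputable def laurentAction : AddMonoidAlgebra R G →ₐ[R] Module.End R (G → R) :=
  AddMonoidAlgebra.lift R (Module.End R (G → R)) G
    { toFun := fun m => LinearMap.funLeft R R fun n => n - m.toAdd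
      map_one' := by ext; simp [LinearMap.funLeft_apply]
      map_mul' := fun a b => by ext; simp [LinearMap.funLeft_apply, sub_sub] }

theorem laurentAction_single (g : G) (a : R) (c : G → R) (n : G) :
    laurentAction R G (single g a) c n = a * c (n - g) := by
  simp [laurentAction, LinearMap.funLeft_apply]

theorem laurentAction_apply (f : AddMonoidAlgebra R G) (c : G → R) (n : G) :
    laurentAction R G f c n = ∑ m ∈ f.coeff.support, f.coeff m * c (n - m) := by
  simp [laurentAction, AddMonoidAlgebra.lift_apply, Finsupp.sum, LinearMap.funLeft_apply]

theorem laurentAction_map (φ : R →+* S) (f : AddMonoidAlgebra R G) (c : G → R) (n : G) :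
    laurentAction S G (mapRingHom G φ f) (fun m => φ (c m)) n = φ (laurentAction R G f c n) := by
  induction f using AddMonoidAlgebra.induction_linear with
  | zero => simp
  | add f g hf hg => simp [hf, hg]
  | single m a => simp [laurentAction_single]

/-- The ideal of Laurent polynomials annihilating the configuration `c`. -/
def annihilatorIdeal (c : G → R) : Ideal (AddMonoidAlgebra R G) where
  carrier := {f | laurentAction R G f c = 0}
  add_mem' := fun {f g} (hf : _ = _) (hg : _ = _) => by simp [hf, hg]
  zero_mem' := by simp
  smul_mem' := fun g f (hf : _ = _) => by simp [hf]

theorem mem_annihilatorIdeal {f : AddMonoidAlgebra R G} {c : G → R} :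
    f ∈ annihilatorIdeal c ↔ ∀ n, laurentAction R G f c n = 0 :=
  funext_iff

theorem annihilates_iff_mem_annihilatorIdeal {f : LP R} {c : ℤ × ℤ → R} :
    Annihilates f c ↔ f ∈ annihilatorIdeal c := by
  simp only [Annihilates, mem_annihilatorIdeal, laurentAction_apply]

theorem map_mem_annihilatorIdeal (φ : R →+* S) {f : AddMonoidAlgebra R G} {c : G → R}
    (hf : f ∈ annihilatorIdeal c) :
    mapRingHom G φ f ∈ annihilatorIdeal fun n => φ (c n) := by
  rw [mem_annihilatorIdeal] at hf ⊢
  intro n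
  rw [laurentAction_map, hf, map_zero]

theorem mem_annihilatorIdeal_of_smul_mem [NoZeroDivisors R] {d : R} (hd : d ≠ 0)
    {f : AddMonoidAlgebra R G} {c : G → R} (h : d • f ∈ annihilatorIdeal c) :
    f ∈ annihilatorIdeal c := by
  simpa [mem_annihilatorIdeal, hd] using h

end Action

section Dilation

open AddMonoidAlgebra (single mapRingHom)

variable {R S M : Type*} [CommSemiring R] [CommSemiring S] [AddCommMonoid M]

/-- The substitution `f(x) ↦ f(x ^ q)`, which multiplies every exponent by `q`. -/
noncomputable def dilate (q : ℕ) : AddMonoidAlgebra R M →ₐ[R] AddMonoidAlgebra R M :=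
  AddMonoidAlgebra.mapDomainAlgHom R R (nsmulAddMonoidHom q)

theorem dilate_single (q : ℕ) (m : M) (a : R) : dilate q (single m a) = single (q • m) a := by
  simp [dilate]

theorem mapRingHom_dilate (φ : R →+* S) (q : ℕ) (f : AddMonoidAlgebra R M) :
    mapRingHom M φ (dilate q f) = dilate q (mapRingHom M φ f) := by
  induction f using AddMonoidAlgebra.induction_linear with
  | zero => simp
  | add f g hf hg => simp [hf, hg]
  | single m a => simp [dilate_single]

theorem dilate_eq_pow (q : ℕ) [Fact q.Prime] (f : AddMonoidAlgebra (ZMod q) M) :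
    dilate q f = f ^ q := by
  have : CharP (AddMonoidAlgebra (ZMod q) M) q :=
    charP_of_injective_algebraMap (FaithfulSMul.algebraMap_injective (ZMod q) _) q
  induction f using AddMonoidAlgebra.induction_linear with
  | zero => simp [(Fact.out : q.Prime).ne_zero]
  | add f g hf hg => rw [map_add, hf, hg, add_pow_char]
  | single m a => rw [dilate_single, AddMonoidAlgebra.single_pow, ZMod.pow_card]

variable {R G : Type*} [CommRing R] [AddCommGroup G]

theorem laurentAction_dilate_apply (q : ℕ) (f : AddMonoidAlgebra R G) (c : G → R) (n : G) :
    laurentAction R G (dilate q f) c n =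
      ∑ m ∈ f.coeff.support, f.coeff m * c (n - q • m) := by
  conv_lhs => rw [← f.sum_coeff_single]
  simp [Finsupp.sum, dilate_single, laurentAction_single]

theorem prime_dvd_laurentAction_dilate {q : ℕ} (hq : q.Prime) {f : AddMonoidAlgebra ℤ G}
    {c : G → ℤ} (hf : f ∈ annihilatorIdeal c) (n : G) :
    (q : ℤ) ∣ laurentAction ℤ G (dilate q f) c n := by
  have : Fact q.Prime := ⟨hq⟩
  let φ := Int.castRingHom (ZMod q)
  have hmem : mapRingHom G φ (dilate q f) ∈ annihilatorIdeal fun n => φ (c n) := by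
    rw [mapRingHom_dilate, dilate_eq_pow]
    exact Ideal.pow_mem_of_mem _ (map_mem_annihilatorIdeal φ hf) q hq.pos
  rw [← ZMod.intCast_zmod_eq_zero_iff_dvd]
  refine (laurentAction_map φ _ c n).symm.trans ?_
  exact mem_annihilatorIdeal.1 hmem n

theorem abs_laurentAction_dilate_le (q : ℕ) (f : AddMonoidAlgebra ℤ G) {c : G → ℤ} {B : ℤ}
    (hB : ∀ n, |c n| ≤ B) (n : G) :
    |laurentAction ℤ G (dilate q f) c n| ≤ (∑ m ∈ f.coeff.support, |f.coeff m|) * B := by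
  rw [laurentAction_dilate_apply, Finset.sum_mul]
  refine (Finset.abs_sum_le_sum_abs _ _).trans (Finset.sum_le_sum fun m _ => ?_)
  rw [abs_mul]
  exact mul_le_mul_of_nonneg_left (hB _) (abs_nonneg _)

-- `f(x ^ q) ≡ f ^ q` modulo `q`, so the values of `f(x ^ q) • c` are multiples of `q`, but they
-- are bounded independently of `q`.
theorem dilate_mem_annihilatorIdeal_of_lt {q : ℕ} (hq : q.Prime) {f : AddMonoidAlgebra ℤ G}
    {c : G → ℤ} (hf : f ∈ annihilatorIdeal c) {B : ℤ} (hB : ∀ n, |c n| ≤ B)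
    (hqB : (∑ m ∈ f.coeff.support, |f.coeff m|) * B < q) :
    dilate q f ∈ annihilatorIdeal c :=
  mem_annihilatorIdeal.2 fun n => Int.eq_zero_of_abs_lt_dvd (prime_dvd_laurentAction_dilate hq hf n)
    ((abs_laurentAction_dilate_le q f hB n).trans_lt hqB)

end Dilation

theorem exists_smul_eq_and_map_ne_zero (S : Type*) [CommRing S] [Nontrivial S] {M : Type*}
    [AddMonoid M] {f : AddMonoidAlgebra ℤ M} (hf : f ≠ 0) :
    ∃ d : ℤ, d ≠ 0 ∧ ∃ g : AddMonoidAlgebra ℤ M,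
      d • g = f ∧ AddMonoidAlgebra.mapRingHom M (Int.castRingHom S) g ≠ 0 := by
  have hne : ∃ m ∈ f.coeff.support, f.coeff m ≠ 0 := by
    obtain ⟨m, hm⟩ := Finsupp.ne_iff.1 (AddMonoidAlgebra.coeff_injective.ne hf)
    exact ⟨m, Finsupp.mem_support_iff.2 hm, hm⟩
  let d := f.coeff.support.gcd f.coeff
  let g : AddMonoidAlgebra ℤ M := .ofCoeff (f.coeff.mapRange (· / d) (Int.zero_ediv d))
  have hg : ∀ m ∈ f.coeff.support, f.coeff m = d * g.coeff m := fun m hm =>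
    (Int.mul_ediv_cancel' (Finset.gcd_dvd hm)).symm
  refine ⟨d, Finset.gcd_ne_zero_iff.2 hne, g, ?_, fun hmap => ?_⟩
  · ext m
    rw [AddMonoidAlgebra.coeff_smul, Finsupp.smul_apply, smul_eq_mul]
    by_cases hm : m ∈ f.coeff.support
    · exact (hg m hm).symm
    · simp [g, Finsupp.notMem_support_iff.1 hm]
  · have hchar : (ringChar S : ℤ) ∣ f.coeff.support.gcd g.coeff := Finset.dvd_gcd fun m _ => by
      rw [← CharP.intCast_eq_zero_iff S]
      simpa using congrArg (fun h => h.coeff m) hmap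
    rw [Finset.extract_gcd' f.coeff g.coeff hne hg] at hchar
    exact CharP.ringChar_ne_one (Nat.dvd_one.1 (Int.natCast_dvd_natCast.1 hchar))

section Specialization

theorem map_aevalAeval {k A B : Type*} [CommRing k] [CommRing A] [CommRing B] [Algebra k A]
    [Algebra k B] (φ : A →ₐ[k] B) (x y : A) (P : k[X][Y]) :
    φ (aevalAeval x y P) = aevalAeval (φ x) (φ y) P := by
  have : φ.comp (aevalAeval x y) = aevalAeval (φ x) (φ y) := by ext <;> simp
  exact DFunLike.congr_fun this P

theorem eval_map_aeval {k A : Type*} [CommRing k] [CommRing A] [Algebra k A] (x y : A)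
    (P : k[X][Y]) :
    (P.map ((aeval x : k[X] →ₐ[k] A) : k[X] →+* A)).eval y = aevalAeval x y P := by
  have : (evalRingHom y).comp (mapRingHom ((aeval x : k[X] →ₐ[k] A) : k[X] →+* A)) =
      (aevalAeval x y : k[X][Y] →ₐ[k] A) := by
    ext <;> simp
  exact DFunLike.congr_fun this P

variable {k : Type*} [Field k] {q : ℕ} {s : k[X]} {P : k[X][Y]}

-- The substitutions `X ↦ ζ ^ i * X` fix `X ^ q` but move `s`, so `P(X ^ q, Y)` has the `q` distinct
-- roots `s(ζ ^ i * X)`.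
theorem eq_zero_of_aevalAeval_X_pow_eq_zero_of_isPrimitiveRoot {K : Type*} [Field K] [Algebra k K]
    {ζ : K} (hζ : IsPrimitiveRoot ζ q) (hs : s.coeff 1 ≠ 0) (hdeg : P.natDegree < q)
    (h : aevalAeval (X ^ q) s P = 0) : P = 0 := by
  let expandMap : k[X] →ₐ[k] K[X] := aeval (X ^ q)
  let scale (i : Fin q) : k[X] →ₐ[k] K[X] := aeval (C (ζ ^ (i : ℕ)) * X)
  have expandMap_eq (p : k[X]) : expandMap p = expand K q (p.map (algebraMap k K)) :=
    (aeval_map_algebraMap K _ p).symm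
  have expandMap_injective : Function.Injective expandMap := fun p₁ p₂ hp => by
    rw [expandMap_eq, expandMap_eq] at hp
    exact map_injective _ (algebraMap k K).injective
      (expand_injective (Nat.zero_lt_of_lt hdeg) hp)
  have coeff_scale (i : Fin q) :
      (scale i s).coeff 1 = algebraMap k K (s.coeff 1) * ζ ^ (i : ℕ) := by
    have : scale i s = (s.map (algebraMap k K)).comp (C (ζ ^ (i : ℕ)) * X) :=
      (aeval_map_algebraMap K _ s).symm
    rw [this, comp_C_mul_X_coeff, coeff_map, pow_one]
  have scale_injective : Function.Injective fun i => scale i s := fun i j hij => by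
    have hcoeff := congrArg (coeff · 1) hij
    simp only [coeff_scale] at hcoeff
    exact Fin.ext (hζ.pow_inj i.2 j.2 (mul_left_cancel₀ (by simpa) hcoeff))
  have eval_scale (i : Fin q) : (P.map (expandMap : k[X] →+* K[X])).eval (scale i s) = 0 := by
    have scale_X_pow : scale i (X ^ q) = X ^ q := by
      rw [map_pow, aeval_X, mul_pow, ← C_pow, pow_right_comm, hζ.pow_eq_one, one_pow, C_1, one_mul]
    rw [eval_map_aeval, ← scale_X_pow, ← map_aevalAeval, h, map_zero]
  have hmap : P.map (expandMap : k[X] →+* K[X]) = 0 :=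
    eq_zero_of_natDegree_lt_card_of_eval_eq_zero _ scale_injective eval_scale
      (natDegree_map_le.trans_lt (by simpa using hdeg))
  exact (Polynomial.map_eq_zero_iff expandMap_injective).1 hmap

theorem eq_zero_of_aevalAeval_X_pow_eq_zero (hq : (q : k) ≠ 0) (hs : s.coeff 1 ≠ 0)
    (hdeg : P.natDegree < q) (h : aevalAeval (X ^ q) s P = 0) : P = 0 := by
  have : NeZero (q : AlgebraicClosure k) :=
    ⟨by simpa using (algebraMap k (AlgebraicClosure k)).injective.ne hq⟩
  obtain ⟨ζ, hζ⟩ := HasEnoughRootsOfUnity.exists_primitiveRoot (AlgebraicClosure k) q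
  exact eq_zero_of_aevalAeval_X_pow_eq_zero_of_isPrimitiveRoot hζ hs hdeg h

theorem coeff_one_pow {R : Type*} [CommSemiring R] (r : R[X]) (n : ℕ) :
    (r ^ n).coeff 1 = n * r.coeff 1 * r.coeff 0 ^ (n - 1) := by
  rw [← Polynomial.coeff_coe, Polynomial.coe_pow, PowerSeries.coeff_one_pow]
  simp

end Specialization

section FiniteField

variable {k : Type*} [Field k] [Finite k]

theorem exists_dvd_X_pow_sub_X_pow {F : k[X]} (hF : F ≠ 0) :
    ∃ a b : ℕ, a ≠ b ∧ F ∣ X ^ a - X ^ b := by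
  have : Module.Finite k (AdjoinRoot F) := (AdjoinRoot.powerBasis hF).finite
  have : Finite (AdjoinRoot F) := Module.finite_of_finite k
  obtain ⟨a, b, hab, heq⟩ :=
    Finite.exists_ne_map_eq_of_infinite fun n : ℕ => AdjoinRoot.mk F (X ^ n)
  exact ⟨a, b, hab, AdjoinRoot.mk_eq_mk.1 heq⟩

open AddMonoidAlgebra (single) in
theorem periodic_of_aeval_single_mem_annihilatorIdeal {c : ℤ × ℤ → k} {g : ℤ × ℤ} (hg : g ≠ 0)
    {F : k[X]} (hF : F ≠ 0) (h : aeval (single g 1) F ∈ annihilatorIdeal c) : Periodic c := by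
  obtain ⟨a, b, hab, hdvd⟩ := exists_dvd_X_pow_sub_X_pow hF
  have hmem : aeval (single g 1) (X ^ a - X ^ b : k[X]) ∈ annihilatorIdeal c :=
    Ideal.mem_of_dvd _ (map_dvd _ hdvd) h
  have hshift (n : ℤ × ℤ) : c (n - a • g) = c (n - b • g) := by
    have := mem_annihilatorIdeal.1 hmem n
    simpa [AddMonoidAlgebra.single_pow, laurentAction_single, sub_eq_zero] using this
  refine ⟨((b : ℤ) - a) • g, smul_ne_zero (by omega) hg, fun n => ?_⟩
  calc c (n + ((b : ℤ) - a) • g) = c (n + b • g - a • g) := by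
        rw [sub_smul, natCast_zsmul, natCast_zsmul, add_sub_assoc]
    _ = c n := by rw [hshift, add_sub_cancel_right]

end FiniteField

section SpaceTime

open AddMonoidAlgebra (single)

variable {R : Type*} [CommRing R]

variable (R) in
/-- The Laurent monomial acting on configurations by `c ↦ c(· + (1, 0))`. -/
noncomputable abbrev rightShift : LP R := single (-1, 0) 1

variable (R) in
/-- The Laurent monomial acting on configurations by `c ↦ c(· + (0, 1))`. -/
noncomputable abbrev upShift : LP R := single (0, -1) 1

theorem eventually_single_mul_mem_range_aevalAeval (f : LP R) :
    ∀ᶠ N : ℕ in Filter.atTop, single ((-N, -N) : ℤ × ℤ) 1 * f ∈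
      (aevalAeval (rightShift R) (upShift R) : R[X][Y] →ₐ[R] LP R).range := by
  induction f using AddMonoidAlgebra.induction_linear with
  | zero => simp
  | add f g hf hg =>
    filter_upwards [hf, hg] with N hfN hgN
    rw [mul_add]
    exact add_mem hfN hgN
  | single m a =>
    filter_upwards [Filter.eventually_ge_atTop m.1.toNat, Filter.eventually_ge_atTop m.2.toNat]
      with N hN₁ hN₂
    refine ⟨C (C a * X ^ (N - m.1).toNat) * X ^ (N - m.2).toNat, ?_⟩
    have h₁ : ((N - m.1).toNat : ℤ) = N - m.1 := Int.toNat_of_nonneg (by omega)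
    have h₂ : ((N - m.2).toNat : ℤ) = N - m.2 := Int.toNat_of_nonneg (by omega)
    have hm : ((-N, -N) : ℤ × ℤ) + m = (m.1 - N, m.2 - N) :=
      Prod.ext (neg_add_eq_sub _ _) (neg_add_eq_sub _ _)
    simp [AddMonoidAlgebra.single_pow, AddMonoidAlgebra.single_mul_single, h₁, h₂, hm]

theorem dilate_aevalAeval_shift (q : ℕ) (P : R[X][Y]) :
    dilate q (aevalAeval (rightShift R) (upShift R) P) =
      aevalAeval (rightShift R ^ q) (upShift R ^ q) P := by
  simp only [map_aevalAeval, dilate_single, AddMonoidAlgebra.single_pow, one_pow]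

/-- `c` is a space-time diagram, with time along the second coordinate, of the linear cellular
automaton whose local rule has the coefficients of `r` as weights. -/
def IsSpaceTimeDiagram (r : R[X]) (c : ℤ × ℤ → R) : Prop :=
  ∀ i j : ℤ, c (i, j + 1) = r.sum fun m a => a * c (i + m, j)

namespace IsSpaceTimeDiagram

variable {r : R[X]} {c : ℤ × ℤ → R}

theorem upShift_sub_aeval_mem (hc : IsSpaceTimeDiagram r c) :
    upShift R - aeval (rightShift R) r ∈ annihilatorIdeal c := by
  rw [mem_annihilatorIdeal]
  rintro ⟨i, j⟩
  simp [aeval_def, eval₂_eq_sum, Polynomial.sum, laurentAction_single, hc i j,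
    AddMonoidAlgebra.single_pow]

theorem aeval_mem_annihilatorIdeal (hc : IsSpaceTimeDiagram r c) {q : ℕ} {P : R[X][Y]}
    (hP : dilate q (aevalAeval (rightShift R) (upShift R) P) ∈ annihilatorIdeal c) :
    aeval (rightShift R) (aevalAeval (X ^ q) (r ^ q) P) ∈ annihilatorIdeal c := by
  let π := Ideal.Quotient.mkₐ R (annihilatorIdeal c)
  have hup : π (upShift R) = π (aeval (rightShift R) r) :=
    Ideal.Quotient.eq.2 hc.upShift_sub_aeval_mem
  refine Ideal.Quotient.eq_zero_iff_mem.1 ?_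
  calc π (aeval (rightShift R) (aevalAeval (X ^ q) (r ^ q) P))
    _ = aevalAeval (π (rightShift R) ^ q) (π (upShift R) ^ q) P := by
        simp only [map_aevalAeval, map_pow, aeval_X, hup]
    _ = π (dilate q (aevalAeval (rightShift R) (upShift R) P)) := by
        rw [dilate_aevalAeval_shift, map_aevalAeval, map_pow, map_pow]
    _ = 0 := Ideal.Quotient.eq_zero_iff_mem.2 hP

theorem periodic_of_dilate_mem {k : Type*} [Field k] [Finite k] {r : k[X]}
    (hr₀ : r.coeff 0 ≠ 0) (hr₁ : r.coeff 1 ≠ 0) {c : ℤ × ℤ → k} (hc : IsSpaceTimeDiagram r c)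
    {f : LP k} (hf : f ≠ 0)
    (h : ∀ N : ℕ, ∃ q > N, (q : k) ≠ 0 ∧ dilate q f ∈ annihilatorIdeal c) : Periodic c := by
  obtain ⟨N, P, hP : aevalAeval _ _ P = _⟩ := (eventually_single_mul_mem_range_aevalAeval f).exists
  have hP₀ : P ≠ 0 := by
    rintro rfl
    have hunit : IsUnit (single ((-N, -N) : ℤ × ℤ) (1 : k)) :=
      (Group.isUnit (Multiplicative.ofAdd _)).map (AddMonoidAlgebra.of k (ℤ × ℤ))
    exact hf (hunit.mul_right_eq_zero.1 (by rw [← hP, map_zero]))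
  obtain ⟨q, hPq, hq, hqf⟩ := h P.natDegree
  have hcoeff : (r ^ q).coeff 1 ≠ 0 := by
    rw [coeff_one_pow]
    exact mul_ne_zero (mul_ne_zero hq hr₁) (pow_ne_zero _ hr₀)
  refine periodic_of_aeval_single_mem_annihilatorIdeal (g := (-1, 0)) (by simp)
    (mt (eq_zero_of_aevalAeval_X_pow_eq_zero hq hcoeff hPq) hP₀)
    (hc.aeval_mem_annihilatorIdeal ?_)
  rw [hP, map_mul]
  exact Ideal.mul_mem_left _ _ hqf

end IsSpaceTimeDiagram

end SpaceTime

theorem isSpaceTimeDiagram_of_ledrappier {R : Type*} [CommRing R] {c : ℤ × ℤ → R}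
    (hc : ∀ i j : ℤ, c (i, j) + c (i + 1, j) + c (i, j + 1) = 0) :
    IsSpaceTimeDiagram (-1 - X) c := by
  intro i j
  have hdeg : (-1 - X : R[X]).natDegree < 2 := Nat.lt_succ_of_le (by compute_degree)
  have hsum : ((-1 - X : R[X]).sum fun m a => a * c (i + m, j)) = -c (i, j) - c (i + 1, j) := by
    rw [sum_over_range' _ (by simp) 2 hdeg, Finset.sum_range_succ, Finset.sum_range_one]
    simp [coeff_one, coeff_X, sub_eq_add_neg]
  rw [hsum]
  linear_combination hc i j

theorem ledrappier_int_annihilator_periodic_general {k : Type*} [Field k] [Finite k] {r : k[X]}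
    (hr₀ : r.coeff 0 ≠ 0) (hr₁ : r.coeff 1 ≠ 0) {c : ℤ × ℤ → k}
    (hc : IsSpaceTimeDiagram r c) {c' : ℤ × ℤ → ℤ} (hc' : ∀ n, (c' n : k) = c n) {B : ℤ}
    (hB : ∀ n, |c' n| ≤ B) (h : ∃ f : LP ℤ, f ≠ 0 ∧ Annihilates f c') : Periodic c := by
  obtain rfl : (fun n => (c' n : k)) = c := funext hc'
  obtain ⟨f, hf, hfc⟩ := h
  obtain ⟨d, hd, g, rfl, hg⟩ := exists_smul_eq_and_map_ne_zero k hf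
  have hgc : g ∈ annihilatorIdeal c' :=
    mem_annihilatorIdeal_of_smul_mem hd (annihilates_iff_mem_annihilatorIdeal.1 hfc)
  refine hc.periodic_of_dilate_mem hr₀ hr₁ hg fun N => ?_
  obtain ⟨q, hq, hqp⟩ := Nat.exists_infinite_primes
    (N + ringChar k + ((∑ m ∈ g.coeff.support, |g.coeff m|) * B).toNat + 1)
  have hqk : (q : k) ≠ 0 := by
    rw [Ne, ringChar.spec, Nat.dvd_prime hqp]
    rintro (hchar | hchar)
    · exact CharP.ringChar_ne_one hchar
    · omega
  refine ⟨q, by omega, hqk, ?_⟩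
  rw [← mapRingHom_dilate]
  exact map_mem_annihilatorIdeal (Int.castRingHom k)
    (dilate_mem_annihilatorIdeal_of_lt hqp hgc hB (by omega))

/-- a Ledrappier configuration with a nontrivial annihilator over ℤ is periodic. -/
theorem ledrappier_int_annihilator_periodic (c : ℤ × ℤ → ZMod 2)
    (hc : ∀ i j : ℤ, c (i, j) + c (i + 1, j) + c (i, j + 1) = 0)
    (h : ∃ f : LP ℤ, f ≠ 0 ∧ Annihilates f (fun n => ((c n).val : ℤ))) :
    Periodic c :=
  ledrappier_int_annihilator_periodic_general (by simp) (by simp [coeff_one])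
    (isSpaceTimeDiagram_of_ledrappier hc) (fun n => by simp) (B := 1)
    (fun n => by generalize c n = a; decide +revert) h
end
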